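/- arXiv:1406.5458 — 2 statements merged into one kernel-verified Lean document; each statement's English description precedes it below -/
import Mathlib

section
/- For all n ≥ 1, the total number of occurrences of the smallest part among overpartitions of 3n whose smallest part is even and not overlined is divisible by 3. -/
/-- An overpartition of `n`: a partition of `n` together with a set of part
sizes that are overlined (the first occurrence of each such size is overlined). -/
def Overpartition (n : ℕ) : Type :=
  Σ p : Nat.Partition n, {s : Finset ℕ // s ⊆ p.parts.toFinset}

noncomputable instance (n : ℕ) : Fintype (Overpartition n) := by
  unfold Overpartition
  classical
  have : ∀ p : Nat.Partition n, Fintype {s : Finset ℕ // s ⊆ p.parts.toFinset} := fun p =>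
    Fintype.subtype p.parts.toFinset.powerset (by simp)
  exact Sigma.instFintype

/-- The smallest part of a partition (junk value `0` for the empty partition). -/
noncomputable def smallestPart {n : ℕ} (p : Nat.Partition n) : ℕ :=
  sInf {m | m ∈ p.parts}

open scoped Classical in
/-- `spt2bar n`: the total number of occurrences of the smallest part, summed over
all overpartitions of `n` whose smallest part is even and not overlined. -/
noncomputable def spt2bar (n : ℕ) : ℕ :=
  ∑ o : Overpartition n,
    if Even (smallestPart o.1) ∧ smallestPart o.1 ∉ o.2.1 then
      o.1.parts.count (smallestPart o.1)
    else 0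

/-! Let `θ(q) = ∑ q ^ (M ^ 2)` over all integers `M`. The generating function of `spt2bar` is
`S(q) = ∑ q ^ (2n) / (1 - q ^ (2n)) ^ 2 * ∏ (1 + q ^ i) / (1 - q ^ i)`, the product being over
`i > 2n`. A finite form of the Gauss identity `∏ (1 - q ^ i) / (1 + q ^ i) = θ(-q)` turns the
product into a quotient of partial theta sums, and the sum over `n` telescopes, whence
`S(-q) θ(q) = L(q) := ∑ j q ^ (2dj) + 2 ∑ j q ^ (d ^ 2 + 2dj)`, summed over `d, j ≥ 1`.

Work modulo `3` and put `Dθ = q * dθ/dq`. The coefficients of `θ` vanish at exponents `≡ 2`, those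
of `L` at exponents `≡ 1`, and those of `L (θ + Dθ)` at exponents `≡ 0`: after a linear change of
variables the latter are weighted counts of integer points on `M ^ 2 + x ^ 2 - k ^ 2 = n`, which
cancel by symmetry. Since the coefficient of `q ^ b` in `θ (θ + Dθ)` is `1 + 2b` times the one in
`θ ^ 2`, it vanishes for `b ≡ 1`. Comparing coefficients in `S(-q) θ = L` and in
`S(-q) θ (θ + Dθ) = L (θ + Dθ)` then kills, by induction, the coefficients of `S(-q)` at all
exponents `≢ 2`. -/

namespace Spt2Bar

open Finset PowerSeries

/-! ### Gaussian binomials and the finite Gauss identity -/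

section QBinomial

variable {R : Type*} [CommRing R]

/-- The `q`-Pochhammer symbol `(q; q)_n = (1 - q) ⋯ (1 - q ^ n)`. -/
def qPochhammer (q : R) (n : ℕ) : R := ∏ i ∈ range n, (1 - q ^ (i + 1))

/-- The Gaussian binomial coefficient, defined by the `q`-Pascal rule so that it makes sense for
every `q` in a commutative ring. -/
def qBinomial (q : R) : ℕ → ℕ → R
  | _, 0 => 1
  | 0, _ + 1 => 0
  | n + 1, k + 1 => qBinomial q n k + q ^ (k + 1) * qBinomial q n (k + 1)

lemma qPochhammer_succ (q : R) (n : ℕ) :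
    qPochhammer q (n + 1) = qPochhammer q n * (1 - q ^ (n + 1)) := prod_range_succ _ n

lemma qBinomial_zero_right (q : R) (n : ℕ) : qBinomial q n 0 = 1 := by
  cases n <;> rfl

lemma qBinomial_eq_zero_of_lt (q : R) {n k : ℕ} (h : n < k) : qBinomial q n k = 0 := by
  induction n generalizing k with
  | zero => obtain ⟨k, rfl⟩ := Nat.exists_eq_succ_of_ne_zero h.ne'; rfl
  | succ n ih =>
    obtain ⟨k, rfl⟩ := Nat.exists_eq_succ_of_ne_zero (Nat.ne_zero_of_lt h)
    rw [qBinomial, ih (by omega), ih (by omega), mul_zero, add_zero]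

lemma qBinomial_self (q : R) (n : ℕ) : qBinomial q n n = 1 := by
  induction n with
  | zero => rfl
  | succ n ih => rw [qBinomial, ih, qBinomial_eq_zero_of_lt q n.lt_succ_self, mul_zero, add_zero]

lemma qBinomial_mul_qPochhammer (q : R) (a b : ℕ) :
    qBinomial q (a + b) a * (qPochhammer q a * qPochhammer q b) = qPochhammer q (a + b) := by
  induction h : a + b generalizing a b with
  | zero =>
    obtain ⟨rfl, rfl⟩ := Nat.add_eq_zero_iff.1 h
    simp [qBinomial, qPochhammer]
  | succ m ih =>
    rcases a with - | a
    · obtain rfl : b = m + 1 := by omega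
      simp [qBinomial, qPochhammer]
    rcases b with - | b
    · obtain rfl : a = m := by omega
      simp [qBinomial_self, qPochhammer]
    have hleft := ih a (b + 1) (by omega)
    have hright := ih (a + 1) b (by omega)
    rw [qBinomial, qPochhammer_succ q m, show m + 1 = (a + 1) + (b + 1) by omega]
    rw [qPochhammer_succ q b] at hleft
    rw [qPochhammer_succ q a] at hright ⊢
    rw [qPochhammer_succ q b]
    linear_combination (1 - q ^ (a + 1)) * hleft + q ^ (a + 1) * (1 - q ^ (b + 1)) * hright

lemma sum_antidiagonal_mul_pow_mul {a : ℕ → R} (y : R) {m : ℕ} (ha : a (m + 1) = 0) :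
    (∑ p ∈ antidiagonal m, a p.1 * y ^ p.2) * y
      = ∑ p ∈ antidiagonal (m + 1), a p.1 * y ^ p.2 := by
  rw [Nat.sum_antidiagonal_succ', ha, zero_mul, zero_add, sum_mul]
  exact sum_congr rfl fun p _ => by rw [pow_succ, mul_assoc]

theorem prod_add_mul_pow (q x y : R) (m : ℕ) :
    ∏ i ∈ range m, (y + x * q ^ i)
      = ∑ p ∈ antidiagonal m, q ^ p.1.choose 2 * qBinomial q m p.1 * x ^ p.1 * y ^ p.2 := by
  induction m generalizing x with
  | zero => simp [qBinomial]
  | succ m ih =>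
    let a (k : ℕ) : R := q ^ k.choose 2 * qBinomial q m k * (x * q) ^ k
    have hsplit : ∏ i ∈ range (m + 1), (y + x * q ^ i)
        = (∏ i ∈ range m, (y + (x * q) * q ^ i)) * (y + x) := by
      rw [prod_range_succ', pow_zero, mul_one]
      simp only [pow_succ', mul_assoc]
    have hy : (∑ p ∈ antidiagonal m, a p.1 * y ^ p.2) * y
        = y ^ (m + 1) + ∑ p ∈ antidiagonal m, a (p.1 + 1) * y ^ p.2 := by
      rw [sum_antidiagonal_mul_pow_mul y (by simp [a, qBinomial_eq_zero_of_lt]),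
        Nat.sum_antidiagonal_succ]
      simp [a, qBinomial_zero_right]
    rw [hsplit, ih, mul_add, hy, Nat.sum_antidiagonal_succ, add_assoc, sum_mul,
      ← sum_add_distrib]
    congr 1
    · simp [qBinomial]
    · refine sum_congr rfl fun p _ => ?_
      simp only [a]
      rw [qBinomial, Nat.choose_succ_succ' p.1 1, Nat.choose_one_right]
      ring

lemma prod_one_sub_odd_mul_qPochhammer_sq (q : R) (n : ℕ) :
    (∏ i ∈ range n, (1 - q ^ (2 * i + 1))) * qPochhammer (q ^ 2) n = qPochhammer q (2 * n) := by
  induction n with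
  | zero => simp [qPochhammer]
  | succ n ih =>
    rw [prod_range_succ, qPochhammer_succ, mul_add_one, qPochhammer_succ, qPochhammer_succ, ← ih]
    ring

lemma prod_one_add_mul_qPochhammer (q : R) (n : ℕ) :
    (∏ i ∈ range n, (1 + q ^ (i + 1))) * qPochhammer q n = qPochhammer (q ^ 2) n := by
  rw [qPochhammer, qPochhammer, ← prod_mul_distrib]
  exact prod_congr rfl fun i _ => by ring

lemma prod_pow_odd (q : R) (n : ℕ) : ∏ i ∈ range n, q ^ (2 * i + 1) = q ^ n ^ 2 := by
  induction n with
  | zero => simp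
  | succ n ih => rw [prod_range_succ, ih]; ring

lemma prod_pow_sub_pow_odd (q : R) (n : ℕ) :
    ∏ i ∈ range (2 * n), (q ^ (2 * n) - q ^ (2 * i + 1))
      = (-1) ^ n * q ^ (3 * n ^ 2) * (∏ i ∈ range n, (1 - q ^ (2 * i + 1))) ^ 2 := by
  have hlow : ∏ i ∈ range n, (q ^ (2 * n) - q ^ (2 * i + 1))
      = (-1) ^ n * q ^ n ^ 2 * ∏ i ∈ range n, (1 - q ^ (2 * i + 1)) := by
    rw [← prod_pow_odd q n, ← prod_range_reflect (fun i => 1 - q ^ (2 * i + 1)), ← card_range n,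
      ← prod_const, card_range, ← prod_mul_distrib, ← prod_mul_distrib]
    refine prod_congr rfl fun i hi => ?_
    have hexp : 2 * n = 2 * i + 1 + (2 * (n - 1 - i) + 1) := by grind
    rw [hexp, pow_add]
    ring
  have hhigh : ∏ i ∈ range n, (q ^ (2 * n) - q ^ (2 * (n + i) + 1))
      = q ^ (2 * n ^ 2) * ∏ i ∈ range n, (1 - q ^ (2 * i + 1)) := by
    have hpow : q ^ (2 * n ^ 2) = ∏ _i ∈ range n, q ^ (2 * n) := by
      rw [prod_const, card_range]
      ring
    rw [hpow, ← prod_mul_distrib]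
    exact prod_congr rfl fun i _ => by ring
  rw [two_mul, prod_range_add, ← two_mul, hlow, hhigh]
  ring

end QBinomial

lemma sum_antidiagonal_two_mul_of_symm {M : Type*} [AddCommMonoid M] (n : ℕ) (f : ℕ → ℕ → M)
    (hf : ∀ i j, i + j = 2 * n → f i j = f j i) :
    ∑ p ∈ antidiagonal (2 * n), f p.1 p.2
      = f n n + 2 • ∑ r ∈ Icc 1 n, f (n - r) (n + r) := by
  induction n generalizing f with
  | zero => simp
  | succ n ih =>
    rw [mul_add_one, Nat.sum_antidiagonal_succ, Nat.sum_antidiagonal_succ',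
      ih (fun i j => f (i + 1) (j + 1)) (fun i j h => hf _ _ (by omega)),
      sum_Icc_succ_top (by omega), hf (2 * n + 1 + 1) 0 (by omega), Nat.sub_self,
      sum_congr rfl (g := fun r => f (n + 1 - r) (n + 1 + r))
        (fun r hr => by
          rw [Nat.sub_add_comm (mem_Icc.1 hr).2, add_right_comm])]
    rw [show n + 1 + (n + 1) = 2 * n + 1 + 1 by ring]
    abel

section Jacobi

variable (K : Type*) [Field K]

/-- The `q`-Pochhammer symbol `(X²; X²)_n`. -/
noncomputable abbrev evenPochhammer (n : ℕ) : K⟦X⟧ := qPochhammer (X ^ 2) n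

/-- The quotient `[2n, n + r] / [2n, n]` of Gaussian binomial coefficients in base `X ^ 2`. It tends
to `1` as `n` grows, and is used for `r ≤ n` only. -/
noncomputable def centralRatio (n r : ℕ) : K⟦X⟧ :=
  evenPochhammer K n ^ 2 * (evenPochhammer K (n - r) * evenPochhammer K (n + r))⁻¹

/-- The finite analogue of `∑ (-1) ^ r * X ^ (r ^ 2)`, the sum over all integers `r` folded to
`r ≥ 1`. -/
noncomputable def jacobiSum (n : ℕ) : K⟦X⟧ :=
  1 + 2 * ∑ r ∈ Icc 1 n, (-1) ^ r * X ^ r ^ 2 * centralRatio K n r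

variable {K} in
lemma constantCoeff_qPochhammer {f : K⟦X⟧} (hf : constantCoeff f = 0) (n : ℕ) :
    constantCoeff (qPochhammer f n) = 1 := by
  simp [qPochhammer, hf]

lemma constantCoeff_evenPochhammer (n : ℕ) : constantCoeff (evenPochhammer K n) = 1 :=
  constantCoeff_qPochhammer (by simp) n

lemma evenPochhammer_succ (n : ℕ) :
    evenPochhammer K (n + 1) = evenPochhammer K n * (1 - X ^ (2 * (n + 1))) := by
  rw [pow_mul]
  exact qPochhammer_succ _ n

lemma evenPochhammer_mul_inv (i j : ℕ) : evenPochhammer K i * evenPochhammer K j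
    * (evenPochhammer K i * evenPochhammer K j)⁻¹ = 1 :=
  PowerSeries.mul_inv_cancel _ (by simp [constantCoeff_evenPochhammer])

lemma prod_X_pow_sub_X_pow_odd_eq_sum (n : ℕ) :
    ∏ i ∈ range (2 * n), ((X : K⟦X⟧) ^ (2 * n) - X ^ (2 * i + 1))
      = evenPochhammer K (2 * n) * ∑ p ∈ antidiagonal (2 * n),
        (-1) ^ p.1 * X ^ (p.1 ^ 2 + p.1 * p.2 + p.2 ^ 2)
          * (evenPochhammer K p.1 * evenPochhammer K p.2)⁻¹ := by
  have h := prod_add_mul_pow (X ^ 2 : K⟦X⟧) (-X) (X ^ (2 * n)) (2 * n)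
  rw [mul_sum]
  convert h using 2 with i _ p hp
  · ring
  · have hbin : qBinomial (X ^ 2 : K⟦X⟧) (2 * n) p.1
        = evenPochhammer K (2 * n) * (evenPochhammer K p.1 * evenPochhammer K p.2)⁻¹ := by
      rw [PowerSeries.eq_mul_inv_iff_mul_eq (by simp [constantCoeff_evenPochhammer]),
        ← mem_antidiagonal.1 hp, qBinomial_mul_qPochhammer]
    have hexp : p.1 ^ 2 + p.1 * p.2 + p.2 ^ 2 = 2 * p.1.choose 2 + p.1 + 2 * n * p.2 := by
      have hchoose : 2 * p.1.choose 2 + p.1 = p.1 ^ 2 := by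
        qify
        rw [Nat.cast_choose_two]
        ring
      rw [hchoose, ← mem_antidiagonal.1 hp]
      ring
    rw [hbin, hexp]
    ring

lemma sum_antidiagonal_even_eq (n : ℕ) :
    ∑ p ∈ antidiagonal (2 * n), (-1) ^ p.1 * X ^ (p.1 ^ 2 + p.1 * p.2 + p.2 ^ 2)
        * (evenPochhammer K p.1 * evenPochhammer K p.2)⁻¹
      = (-1) ^ n * X ^ (3 * n ^ 2) * ((evenPochhammer K n * evenPochhammer K n)⁻¹
        + 2 * ∑ r ∈ Icc 1 n, (-1) ^ r * X ^ r ^ 2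
          * (evenPochhammer K (n - r) * evenPochhammer K (n + r))⁻¹) := by
  let f (i j : ℕ) : K⟦X⟧ :=
    (-1) ^ i * X ^ (i ^ 2 + i * j + j ^ 2) * (evenPochhammer K i * evenPochhammer K j)⁻¹
  have hsymm (i j : ℕ) (hij : i + j = 2 * n) : f i j = f j i := by
    have hsign : (-1 : K⟦X⟧) ^ i = (-1) ^ j :=
      neg_one_pow_congr (Nat.even_add.1 (hij ▸ even_two_mul n))
    simp only [f]
    rw [hsign, mul_comm (evenPochhammer K i)]
    ring
  have hterm (r : ℕ) (hr : r ∈ Icc 1 n) : f (n - r) (n + r) = (-1) ^ n * X ^ (3 * n ^ 2)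
      * ((-1) ^ r * X ^ r ^ 2 * (evenPochhammer K (n - r) * evenPochhammer K (n + r))⁻¹) := by
    obtain ⟨m, rfl⟩ := Nat.exists_eq_add_of_le' (mem_Icc.1 hr).2
    have hsign : (-1 : K⟦X⟧) ^ (m + r) * (-1) ^ r = (-1) ^ m := by
      rw [← pow_add, add_assoc, ← two_mul, pow_add, pow_mul, neg_one_sq, one_pow, mul_one]
    simp only [f]
    rw [Nat.add_sub_cancel, ← hsign]
    ring
  rw [sum_antidiagonal_two_mul_of_symm n f hsymm, sum_congr rfl hterm, ← mul_sum]
  simp only [f]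
  ring

theorem finite_jacobi (n : ℕ) :
    qPochhammer (X : K⟦X⟧) (2 * n) = (∏ i ∈ range (2 * n), (1 + X ^ (i + 1))) * jacobiSum K n := by
  set D := evenPochhammer K
  set O : K⟦X⟧ := ∏ i ∈ range n, (1 - X ^ (2 * i + 1))
  set E : K⟦X⟧ := ∏ i ∈ range (2 * n), (1 + X ^ (i + 1))
  set S : K⟦X⟧ := ∑ r ∈ Icc 1 n, (-1) ^ r * X ^ r ^ 2 * (D (n - r) * D (n + r))⁻¹ with hS
  have hsq : O ^ 2 = D (2 * n) * ((D n * D n)⁻¹ + 2 * S) := by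
    have h := prod_X_pow_sub_X_pow_odd_eq_sum K n
    rw [prod_pow_sub_pow_odd, sum_antidiagonal_even_eq] at h
    refine mul_left_cancel₀ (a := (-1) ^ n * X ^ (3 * n ^ 2)) ?_ ?_
    · simp [X_ne_zero]
    · linear_combination h
  have hOD : O * D n = qPochhammer X (2 * n) := prod_one_sub_odd_mul_qPochhammer_sq X n
  have hED : E * qPochhammer X (2 * n) = D (2 * n) := prod_one_add_mul_qPochhammer X (2 * n)
  have hne : qPochhammer (X : K⟦X⟧) (2 * n) ≠ 0 := by
    intro h
    have := constantCoeff_qPochhammer (K := K) (f := X) (by simp) (2 * n)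
    simp [h] at this
  refine mul_left_cancel₀ hne ?_
  have hcentral : ∑ r ∈ Icc 1 n, (-1) ^ r * X ^ r ^ 2 * centralRatio K n r = D n ^ 2 * S := by
    rw [hS, mul_sum]
    exact sum_congr rfl fun r _ => by rw [centralRatio]; ring
  rw [jacobiSum, hcentral]
  linear_combination D n ^ 2 * hsq - (O * D n + qPochhammer X (2 * n)) * hOD
    - (1 + 2 * (D n ^ 2 * S)) * hED + D (2 * n) * evenPochhammer_mul_inv K n n

/-! ### Telescoping -/

/-- The series `∑ j * X ^ (2 * n * j)` generating the number of copies of a part `2 * n`. -/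
noncomputable def lambertTerm (n : ℕ) : K⟦X⟧ := X ^ (2 * n) * ((1 - X ^ (2 * n)) ^ 2)⁻¹

/-- The generating function of `spt2bar`, with part sizes truncated to at most `2 * N`: the smallest
part is `2 * n` and each larger part `i + 1` contributes `(1 + X ^ (i + 1)) / (1 - X ^ (i + 1))`. -/
noncomputable def sptSeries (N : ℕ) : K⟦X⟧ :=
  ∑ n ∈ Icc 1 N, lambertTerm K n
    * ∏ i ∈ Ico (2 * n) (2 * N), ((1 + X ^ (i + 1)) * (1 - X ^ (i + 1))⁻¹)

lemma prod_Ico_mul_jacobiSum {n N : ℕ} (h : n ≤ N) :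
    (∏ i ∈ Ico (2 * n) (2 * N), ((1 + X ^ (i + 1)) * (1 - X ^ (i + 1))⁻¹)) * jacobiSum K N
      = jacobiSum K n := by
  set e : K⟦X⟧ := ∏ i ∈ Ico (2 * n) (2 * N), (1 + X ^ (i + 1)) with he
  set a : K⟦X⟧ := ∏ i ∈ Ico (2 * n) (2 * N), (1 - X ^ (i + 1)) with ha
  set b : K⟦X⟧ := ∏ i ∈ Ico (2 * n) (2 * N), (1 - X ^ (i + 1))⁻¹ with hb
  set E : K⟦X⟧ := ∏ i ∈ range (2 * n), (1 + X ^ (i + 1)) with hE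
  have hab : a * b = 1 := by
    rw [ha, hb, ← prod_mul_distrib]
    exact prod_eq_one fun i _ => PowerSeries.mul_inv_cancel _ (by simp)
  have hE0 : E ≠ 0 := by
    intro h
    simpa [hE] using congrArg constantCoeff h
  have hn : qPochhammer X (2 * n) = E * jacobiSum K n := finite_jacobi K n
  have hN : qPochhammer X (2 * n) * a = E * e * jacobiSum K N := by
    rw [hE, he, prod_range_mul_prod_Ico _ (by omega), qPochhammer, ha,
      prod_range_mul_prod_Ico _ (by omega)]
    exact finite_jacobi K N
  rw [prod_mul_distrib]
  refine mul_left_cancel₀ hE0 ?_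
  linear_combination b * a * hn - b * hN + E * jacobiSum K n * hab

lemma sptSeries_mul_jacobiSum (N : ℕ) :
    sptSeries K N * jacobiSum K N = ∑ n ∈ Icc 1 N, lambertTerm K n * jacobiSum K n := by
  rw [sptSeries, sum_mul]
  exact sum_congr rfl fun n hn => by rw [mul_assoc, prod_Ico_mul_jacobiSum K (mem_Icc.1 hn).2]

variable {K} in
lemma one_sub_X_pow_ne_zero {m : ℕ} (hm : m ≠ 0) : (1 - X ^ m : K⟦X⟧) ≠ 0 := by
  intro h
  simpa [hm] using congrArg constantCoeff h

lemma centralRatio_succ {n r : ℕ} (hrn : r ≤ n) :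
    centralRatio K (n + 1) r * ((1 - X ^ (2 * (n + 1 - r))) * (1 - X ^ (2 * (n + 1 + r))))
      = centralRatio K n r * (1 - X ^ (2 * (n + 1))) ^ 2 := by
  obtain ⟨m, rfl⟩ := Nat.exists_eq_add_of_le' hrn
  have hinv := evenPochhammer_mul_inv K m (m + r + r)
  have hinv' := evenPochhammer_mul_inv K (m + 1) (m + r + r + 1)
  simp only [centralRatio, show m + r + 1 - r = m + 1 by omega,
    show m + r + 1 + r = m + r + r + 1 by ring, Nat.add_sub_cancel]
  set u := (evenPochhammer K (m + 1) * evenPochhammer K (m + r + r + 1))⁻¹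
  set v := (evenPochhammer K m * evenPochhammer K (m + r + r))⁻¹
  rw [evenPochhammer_succ, evenPochhammer_succ] at hinv'
  rw [evenPochhammer_succ K (m + r)]
  linear_combination evenPochhammer K (m + r) ^ 2 * (1 - X ^ (2 * (m + r + 1))) ^ 2 *
    (v * hinv' - u * (1 - X ^ (2 * (m + 1))) * (1 - X ^ (2 * (m + r + r + 1))) * hinv)

lemma lambertTerm_mul_one_sub_sq {n : ℕ} (hn : n ≠ 0) :
    lambertTerm K n * (1 - X ^ (2 * n)) ^ 2 = X ^ (2 * n) := by
  rw [lambertTerm, mul_assoc, PowerSeries.inv_mul_cancel _ (by simp [hn]), mul_one]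

lemma lambertTerm_mul_centralRatio_succ {n r : ℕ} (hr : 1 ≤ r) (hrn : r ≤ n) :
    lambertTerm K (n + 1) * centralRatio K (n + 1) r
      = lambertTerm K r * (centralRatio K (n + 1) r - centralRatio K n r) := by
  have hsucc := centralRatio_succ K hrn
  have hn := lambertTerm_mul_one_sub_sq K (n := n + 1) (by omega)
  have hr' := lambertTerm_mul_one_sub_sq K (n := r) (by omega)
  have hexp : (X : K⟦X⟧) ^ (2 * (n + 1)) = X ^ (2 * r) * X ^ (2 * (n + 1 - r)) := by
    rw [← pow_add]
    congr 1
    omega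
  have hne {m : ℕ} (hm : m ≠ 0) : (1 - X ^ (2 * m) : K⟦X⟧) ^ 2 ≠ 0 :=
    pow_ne_zero 2 (one_sub_X_pow_ne_zero (by omega))
  refine mul_right_cancel₀ (hne (m := r) (by omega)) ?_
  refine mul_right_cancel₀ (hne (m := n + 1) (by omega)) ?_
  linear_combination centralRatio K (n + 1) r * (1 - X ^ (2 * r)) ^ 2 * hn
    - (centralRatio K (n + 1) r - centralRatio K n r) * (1 - X ^ (2 * (n + 1))) ^ 2 * hr'
    - X ^ (2 * r) * hsucc
    + centralRatio K (n + 1) r * (1 - X ^ (2 * (n + 1 + r))) * hexp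

lemma sum_lambertTerm_mul_centralRatio {r N : ℕ} (hr : 1 ≤ r) (hrN : r ≤ N) :
    ∑ n ∈ Icc r N, lambertTerm K n * centralRatio K n r
      = lambertTerm K r * centralRatio K N r := by
  induction N, hrN using Nat.le_induction with
  | base => simp
  | succ N hrN ih =>
    rw [sum_Icc_succ_top (by omega), ih, lambertTerm_mul_centralRatio_succ K hr hrN]
    ring

lemma sptSeries_mul_jacobiSum_eq (N : ℕ) :
    sptSeries K N * jacobiSum K N = ∑ d ∈ Icc 1 N,
      (1 + 2 * ((-1) ^ d * X ^ d ^ 2 * centralRatio K N d)) * lambertTerm K d := by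
  have hswap : ∑ n ∈ Icc 1 N, ∑ r ∈ Icc 1 n,
        lambertTerm K n * ((-1) ^ r * X ^ r ^ 2 * centralRatio K n r)
      = ∑ r ∈ Icc 1 N, (-1) ^ r * X ^ r ^ 2 * (lambertTerm K r * centralRatio K N r) := by
    rw [sum_comm' (t' := Icc 1 N) (s' := fun r => Icc r N) (by grind)]
    refine sum_congr rfl fun r hr => ?_
    rw [← sum_lambertTerm_mul_centralRatio K (mem_Icc.1 hr).1 (mem_Icc.1 hr).2, mul_sum]
    exact sum_congr rfl fun n _ => by ring
  calc sptSeries K N * jacobiSum K N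
      = ∑ n ∈ Icc 1 N, lambertTerm K n + 2 * ∑ n ∈ Icc 1 N, ∑ r ∈ Icc 1 n,
          lambertTerm K n * ((-1) ^ r * X ^ r ^ 2 * centralRatio K n r) := by
        rw [sptSeries_mul_jacobiSum]
        simp only [jacobiSum, mul_add, mul_one, mul_left_comm _ (2 : K⟦X⟧), sum_add_distrib,
          mul_sum]
    _ = _ := by
        rw [hswap, mul_sum, ← sum_add_distrib]
        exact sum_congr rfl fun d _ => by ring

lemma X_pow_dvd_evenPochhammer_sub {m n : ℕ} (h : m ≤ n) :
    X ^ (2 * (m + 1)) ∣ evenPochhammer K n - evenPochhammer K m := by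
  induction n, h using Nat.le_induction with
  | base => simp
  | succ n hmn ih =>
    rw [evenPochhammer, qPochhammer_succ, mul_sub, mul_one, ← pow_mul, sub_right_comm]
    exact dvd_sub ih (Dvd.dvd.mul_left (pow_dvd_pow _ (by omega)) _)

lemma X_pow_dvd_centralRatio_sub_one {n r : ℕ} (h : r ≤ n) :
    X ^ (2 * (n - r + 1)) ∣ centralRatio K n r - 1 := by
  set D := evenPochhammer K
  have hsub : centralRatio K n r - 1 = (D n * (D n - D (n - r)) - D (n - r) * (D (n + r) - D n))
      * (D (n - r) * D (n + r))⁻¹ := by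
    rw [centralRatio]
    linear_combination evenPochhammer_mul_inv K (n - r) (n + r)
  rw [hsub]
  exact .mul_right (dvd_sub (.mul_left (X_pow_dvd_evenPochhammer_sub K (n.sub_le r)) _)
    (.mul_left ((pow_dvd_pow _ (by omega)).trans
      (X_pow_dvd_evenPochhammer_sub K (n.le_add_right r))) _)) _

end Jacobi

/-! ### The generating function -/

section Expand

variable {K : Type*} [Field K]

lemma expand_mul_mk_two_add_one {i : ℕ} (hi : i ≠ 0) :
    1 + expand i hi (X * PowerSeries.mk fun _ => 2) = (1 + X ^ i : K⟦X⟧) * (1 - X ^ i)⁻¹ := by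
  have hgeom : (X * PowerSeries.mk fun _ => 2) * (1 - X) = (2 * X : K⟦X⟧) := by
    have h2 : (PowerSeries.mk fun _ => 2 : K⟦X⟧) = 2 * PowerSeries.mk 1 := by
      ext n
      rw [two_mul, map_add, coeff_mk, coeff_mk, Pi.one_apply, one_add_one_eq_two]
    rw [h2]
    linear_combination 2 * X * mk_one_mul_one_sub_eq_one K
  have h := congrArg (expand i hi) hgeom
  simp only [map_mul, map_sub, map_one, map_ofNat, expand_X] at h
  rw [PowerSeries.eq_mul_inv_iff_mul_eq (by simp [hi])]
  simp only [map_mul, expand_X] at h ⊢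
  linear_combination h

lemma lambertTerm_eq_expand {n : ℕ} (hn : 2 * n ≠ 0) :
    lambertTerm K n = expand (2 * n) hn (X * PowerSeries.mk fun j => (j + 1 : K)) := by
  have hsq : (PowerSeries.mk fun j => (j + 1 : K)) * (1 - X) ^ 2 = 1 := by
    have h := mk_add_choose_mul_one_sub_pow_eq_one K (d := 1)
    simpa [add_comm] using h
  have h := congrArg (expand (2 * n) hn) hsq
  simp only [map_mul, map_pow, map_sub, map_one, expand_X] at h
  rw [lambertTerm, eq_comm, PowerSeries.eq_mul_inv_iff_mul_eq (by simp [hn]), map_mul, expand_X,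
    mul_assoc, h, mul_one]

open scoped PowerSeries.WithPiTopology in
lemma tsum_smul_X_pow {R : Type*} [CommRing R] [TopologicalSpace R] [T2Space R] {i : ℕ}
    (hi : i ≠ 0) (f : ℕ → ℕ → R) :
    ∑' j, f i (j + 1) • (X : R⟦X⟧) ^ (i * (j + 1))
      = expand i hi (X * PowerSeries.mk fun j => f i (j + 1)) := by
  ext n
  rw [(Nat.Partition.summable_genFun_term' f hi).map_tsum _
    (WithPiTopology.continuous_coeff _ _), coeff_expand]
  simp only [coeff_smul, coeff_X_pow, smul_eq_mul, mul_ite, mul_one, mul_zero]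
  split_ifs with h
  · obtain ⟨c, rfl⟩ := h
    rw [Nat.mul_div_cancel_left _ (Nat.pos_of_ne_zero hi)]
    rcases c with - | c
    · simp [hi]
    · rw [coeff_succ_X_mul, coeff_mk, tsum_eq_single c (by simp +contextual [hi, eq_comm])]
      simp
  · refine (tsum_congr fun j => if_neg fun hj => h ⟨_, hj⟩).trans tsum_zero

theorem genFun_eq_prod {R : Type*} [CommRing R] {f : ℕ → ℕ → R} {N : ℕ}
    (hf : ∀ i, N < i → ∀ c, f i c = 0) :
    Nat.Partition.genFun f
      = ∏ i ∈ range N, (1 + expand (i + 1) i.succ_ne_zero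
          (X * PowerSeries.mk fun j => f (i + 1) (j + 1))) := by
  let : TopologicalSpace R := ⊥
  have : DiscreteTopology R := ⟨rfl⟩
  let := PowerSeries.WithPiTopology.instTopologicalSpace R
  have := PowerSeries.WithPiTopology.instT2Space (R := R)
  have h := Nat.Partition.hasProd_genFun f
  simp only [tsum_smul_X_pow (Nat.succ_ne_zero _) f] at h
  refine h.unique (hasProd_prod_of_ne_finset_one fun i hi => ?_)
  have hzero (c : ℕ) : f (i + 1) c = 0 := hf _ (by simpa using hi) c
  have hmk : (PowerSeries.mk fun _ => 0 : R⟦X⟧) = 0 := by ext; simp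
  simp only [hzero, hmk, mul_zero, map_zero, add_zero]

end Expand

lemma smallestPart_mem {n : ℕ} (hn : n ≠ 0) (p : Nat.Partition n) : smallestPart p ∈ p.parts := by
  refine Nat.sInf_mem (s := {m | m ∈ p.parts}) (Multiset.exists_mem_of_ne_zero fun h => hn ?_)
  rw [← p.parts_sum, h, Multiset.sum_zero]

lemma smallestPart_le {n : ℕ} {p : Nat.Partition n} {i : ℕ} (hi : i ∈ p.parts) :
    smallestPart p ≤ i := Nat.sInf_le hi

/-- The number of occurrences of the smallest part of `p`, counted once for each way of overlining
`p` in which the smallest part is not overlined. -/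
noncomputable def sptWeight {n : ℕ} (p : Nat.Partition n) : ℕ :=
  p.parts.count (smallestPart p) * 2 ^ (p.parts.toFinset.erase (smallestPart p)).card

theorem spt2bar_eq_sum (n : ℕ) :
    spt2bar n = ∑ p : Nat.Partition n, if Even (smallestPart p) then sptWeight p else 0 := by
  classical
  let inst (p : Nat.Partition n) : Fintype {s : Finset ℕ // s ⊆ p.parts.toFinset} :=
    Fintype.subtype p.parts.toFinset.powerset (by simp)
  have hsigma : spt2bar n = ∑ o : (Σ p : Nat.Partition n, {s : Finset ℕ // s ⊆ p.parts.toFinset}),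
      if Even (smallestPart o.1) ∧ smallestPart o.1 ∉ o.2.1 then
        o.1.parts.count (smallestPart o.1) else 0 :=
    Fintype.sum_equiv (Equiv.refl _) _ _ fun _ => by congr
  rw [hsigma, Fintype.sum_sigma]
  refine sum_congr rfl fun p _ => ?_
  rw [← sum_subtype (F := inst p) p.parts.toFinset.powerset (fun _ => mem_powerset)
    (fun s => if Even (smallestPart p) ∧ smallestPart p ∉ s then
      p.parts.count (smallestPart p) else 0)]
  split_ifs with heven
  · have hfilter : {s ∈ p.parts.toFinset.powerset | smallestPart p ∉ s}
        = (p.parts.toFinset.erase (smallestPart p)).powerset := by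
      ext s
      rw [mem_filter, mem_powerset, mem_powerset, subset_erase]
    simp only [heven, true_and]
    rw [← sum_filter, sum_const, hfilter, card_powerset, smul_eq_mul, mul_comm, sptWeight]
  · simp [heven]

section LocalWeight

variable {R : Type*} [CommRing R]

/-- Multiplicity weights for `Nat.Partition.genFun`, allowing parts between `s` and `N`: `c` copies
of the part `s` have weight `b * c`, and every larger part size has weight `2` (overlined or not).
As `genFun` gives weight `1` to the absence of `s`, partitions containing `s` are singled out by
subtracting the case `b = 0` from the case `b = 1`. -/
def localWeight (s N : ℕ) (b : R) (i c : ℕ) : R :=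
  if i = s then b * c else if s < i ∧ i ≤ N then 2 else 0

lemma prod_localWeight {m N : ℕ} (hm : m ≠ 0) (hmN : m ≤ N) (p : Nat.Partition m) (b : R) :
    p.parts.toFinsupp.prod (localWeight (smallestPart p) N b) = b * sptWeight p := by
  have hmem := Multiset.mem_toFinset.2 (smallestPart_mem hm p)
  simp only [Finsupp.prod, Multiset.toFinsupp_support, Multiset.toFinsupp_apply]
  rw [← mul_prod_erase _ _ hmem, localWeight, if_pos rfl, prod_congr rfl (g := fun _ => (2 : R)),
    prod_const, sptWeight]
  · push_cast
    ring
  · intro i hi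
    rw [mem_erase, Multiset.mem_toFinset] at hi
    have hlow := smallestPart_le hi.2
    have hhigh := Nat.Partition.le_of_mem_parts hi.2
    rw [localWeight, if_neg hi.1, if_pos (by omega)]

lemma prod_localWeight_of_ne {m s : ℕ} (N : ℕ) (hm : m ≠ 0) {p : Nat.Partition m}
    (hs : s ≠ smallestPart p) (b b' : R) :
    p.parts.toFinsupp.prod (localWeight s N b) = p.parts.toFinsupp.prod (localWeight s N b') := by
  simp only [Finsupp.prod, Multiset.toFinsupp_support, Multiset.toFinsupp_apply]
  by_cases hmem : s ∈ p.parts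
  · have hvanish (b : R) :
        ∏ i ∈ p.parts.toFinset, localWeight s N b i (p.parts.count i) = 0 := by
      refine prod_eq_zero (Multiset.mem_toFinset.2 (smallestPart_mem hm p)) ?_
      have hle := smallestPart_le hmem
      rw [localWeight, if_neg hs.symm, if_neg (by omega)]
    rw [hvanish, hvanish]
  · refine prod_congr rfl fun i hi => ?_
    have hi : i ≠ s := by
      rintro rfl
      exact hmem (Multiset.mem_toFinset.1 hi)
    rw [localWeight, localWeight, if_neg hi, if_neg hi]

end LocalWeight

section GeneratingFunction

variable {K : Type*} [Field K]

lemma genFun_localWeight {n N : ℕ} (hn : n ≠ 0) (hnN : n ≤ N) (b : K) :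
    Nat.Partition.genFun (localWeight (2 * n) (2 * N) b) = (1 + C b * lambertTerm K n)
      * ∏ i ∈ Ico (2 * n) (2 * N), ((1 + X ^ (i + 1)) * (1 - X ^ (i + 1))⁻¹) := by
  rw [genFun_eq_prod (N := 2 * N) (fun i hi c => by
    rw [localWeight, if_neg (by omega), if_neg (by omega)]),
    ← prod_range_mul_prod_Ico _ (show 2 * n ≤ 2 * N by omega)]
  congr 1
  · rw [prod_eq_single (2 * n - 1)]
    · have hmk : (PowerSeries.mk fun j => b * (j + 1 : ℕ) : K⟦X⟧)
          = C b * PowerSeries.mk fun j => (j + 1 : K) := by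
        ext j
        simp
      have hi : 2 * n - 1 + 1 = 2 * n := by omega
      simp only [hi, localWeight, if_true, hmk]
      rw [mul_left_comm, map_mul, expand_C, ← lambertTerm_eq_expand]
    · intro i hi hne
      have hzero (c : ℕ) : localWeight (2 * n) (2 * N) b (i + 1) c = 0 := by
        rw [localWeight, if_neg (by omega), if_neg (by grind)]
      have hmk : (PowerSeries.mk fun _ => 0 : K⟦X⟧) = 0 := by ext; simp
      simp only [hzero, hmk, mul_zero, map_zero, add_zero]
    · grind
  · refine prod_congr rfl fun i hi => ?_
    have htwo (c : ℕ) : localWeight (2 * n) (2 * N) b (i + 1) c = 2 := by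
      rw [localWeight, if_neg (by grind), if_pos (by grind)]
    simp only [htwo]
    exact expand_mul_mk_two_add_one i.succ_ne_zero

lemma coeff_lambertTerm_mul_prod {m n N : ℕ} (hm : m ≠ 0) (hmN : m ≤ N) (hn : n ≠ 0)
    (hnN : n ≤ N) :
    coeff m (lambertTerm K n
        * ∏ i ∈ Ico (2 * n) (2 * N), ((1 + X ^ (i + 1)) * (1 - X ^ (i + 1))⁻¹))
      = ∑ p : Nat.Partition m, if 2 * n = smallestPart p then (sptWeight p : K) else 0 := by
  have hdiff : lambertTerm K n
        * ∏ i ∈ Ico (2 * n) (2 * N), ((1 + X ^ (i + 1)) * (1 - X ^ (i + 1))⁻¹)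
      = Nat.Partition.genFun (localWeight (2 * n) (2 * N) 1)
        - Nat.Partition.genFun (localWeight (2 * n) (2 * N) 0) := by
    rw [genFun_localWeight hn hnN, genFun_localWeight hn hnN, map_one, map_zero]
    ring
  rw [hdiff, map_sub, Nat.Partition.coeff_genFun, Nat.Partition.coeff_genFun, ← sum_sub_distrib]
  refine sum_congr rfl fun p _ => ?_
  split_ifs with h
  · rw [h, prod_localWeight hm (by omega), prod_localWeight hm (by omega), one_mul, zero_mul,
      sub_zero]
  · rw [prod_localWeight_of_ne _ hm h 1 0, sub_self]

theorem coeff_sptSeries {m N : ℕ} (hm : m ≠ 0) (hmN : m ≤ N) :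
    coeff m (sptSeries K N) = spt2bar m := by
  rw [sptSeries, map_sum, sum_congr rfl (fun n hn => coeff_lambertTerm_mul_prod hm hmN
    (by grind) (mem_Icc.1 hn).2), sum_comm, spt2bar_eq_sum, Nat.cast_sum]
  refine sum_congr rfl fun p _ => ?_
  have hmem := smallestPart_mem hm p
  have hpos := p.parts_pos hmem
  have hle := Nat.Partition.le_of_mem_parts hmem
  split_ifs with h
  · obtain ⟨t, ht⟩ := even_iff_exists_two_mul.1 h
    rw [sum_eq_single t (fun n _ hn => if_neg (by omega)) (by grind), if_pos ht.symm]
  · rw [Nat.cast_zero]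
    refine sum_eq_zero fun n _ => if_neg ?_
    rintro hn
    exact h (hn ▸ even_two_mul n)

end GeneratingFunction

/-! ### Points on the quadric -/

/-- The integer points `(M, x, k)` of the quadric `M ^ 2 + x ^ 2 - k ^ 2 = n` in the box of
radius `N`. -/
noncomputable def quadricPoints (N n : ℕ) : Finset (ℤ × ℤ × ℤ) :=
  (Icc (-N : ℤ) N ×ˢ Icc (-N : ℤ) N ×ˢ Icc (-N : ℤ) N).filter
    fun p => p.1 ^ 2 + p.2.1 ^ 2 - p.2.2 ^ 2 = n

/-- The weight `(x ^ 2 - M ^ 2) * k` modulo `3` of an integer point `(M, x, k)`. -/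
def quadricWeight (p : ℤ × ℤ × ℤ) : ZMod 3 := ((p.2.1 ^ 2 - p.1 ^ 2) * p.2.2 : ℤ)

lemma mem_quadricPoints {N n : ℕ} {M x k : ℤ} :
    (M, x, k) ∈ quadricPoints N n ↔ ((-N ≤ M ∧ M ≤ N) ∧ (-N ≤ x ∧ x ≤ N) ∧ -N ≤ k ∧ k ≤ N) ∧
      M ^ 2 + x ^ 2 - k ^ 2 = n := by
  simp only [quadricPoints, mem_filter, mem_product, mem_Icc]

lemma sum_quadricWeight_eq_zero_of_swap (N n : ℕ) :
    ∑ p ∈ quadricPoints N n with (0 < p.2.2 ∧ p.2.2 < p.2.1) ∧ p.2.2 < p.1,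
      quadricWeight p = 0 := by
  refine sum_involution (fun p _ => (p.2.1, p.1, p.2.2)) ?_ ?_ ?_ ?_
  · rintro ⟨M, x, k⟩ -
    simp only [quadricWeight]
    push_cast
    ring
  · rintro ⟨M, x, k⟩ - hw heq
    obtain rfl : x = M := congrArg Prod.fst heq
    simp [quadricWeight] at hw
  · rintro ⟨M, x, k⟩ h
    simp only [mem_filter, mem_quadricPoints] at h ⊢
    grind
  · rintro ⟨M, x, k⟩ -
    rfl

-- For `M = k` the equation reads `x ^ 2 = n`, so `3 ∣ x` and `k ↦ x - k` negates the weight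
-- mod `3`.
lemma sum_quadricWeight_eq_zero_of_reflect (N : ℕ) {n : ℕ} (hn : 3 ∣ n) :
    ∑ p ∈ quadricPoints N n with (0 < p.2.2 ∧ p.2.2 < p.2.1) ∧ p.1 = p.2.2,
      quadricWeight p = 0 := by
  have three_dvd {M x k : ℤ} (h : M ^ 2 + x ^ 2 - k ^ 2 = n) (hM : M = k) : (x : ZMod 3) = 0 := by
    have hx : x ^ 2 = n := by rw [← h, hM]; ring
    have : (x : ZMod 3) ^ 2 = 0 := by
      rw [← Int.cast_pow, hx, Int.cast_natCast, (ZMod.natCast_eq_zero_iff n 3).2 hn]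
    exact pow_eq_zero_iff two_ne_zero |>.1 this
  refine sum_involution (fun p _ => (p.2.1 - p.1, p.2.1, p.2.1 - p.2.2)) ?_ ?_ ?_ ?_
  · rintro ⟨M, x, k⟩ h
    simp only [mem_filter, mem_quadricPoints] at h
    have hx := three_dvd h.1.2 h.2.2
    simp only [quadricWeight, h.2.2]
    push_cast
    rw [hx]
    ring
  · rintro ⟨M, x, k⟩ h hw heq
    simp only [mem_filter, mem_quadricPoints] at h
    have hx := three_dvd h.1.2 h.2.2
    have hk : (k : ZMod 3) = 0 := by
      have : x - k = k := congrArg (·.2.2) heq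
      have h2 : (2 : ZMod 3) * k = 0 := by
        have := congrArg (Int.cast : ℤ → ZMod 3) this
        push_cast at this
        linear_combination hx - this
      exact (mul_eq_zero.1 h2).resolve_left (by decide)
    exact hw (by simp [quadricWeight, hk])
  · rintro ⟨M, x, k⟩ h
    simp only [mem_filter, mem_quadricPoints] at h ⊢
    grind
  · rintro ⟨M, x, k⟩ -
    simp

lemma sum_filter_trichotomy {ι α M : Type*} [LinearOrder α] [AddCommMonoid M] (s : Finset ι)
    (a b : ι → α) (f : ι → M) :
    ∑ i ∈ s, f i = ∑ i ∈ s with a i < b i, f i + ∑ i ∈ s with a i = b i, f i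
      + ∑ i ∈ s with b i < a i, f i := by
  simp only [sum_filter, ← sum_add_distrib]
  refine sum_congr rfl fun i _ => ?_
  rcases lt_trichotomy (a i) (b i) with h | h | h
  · simp [h, h.ne, h.not_gt]
  · simp [h]
  · simp [h, h.ne', h.not_gt]

/-- The total weight of the points of `quadricPoints N n` with `M < k`, `0 < k < x`. -/
noncomputable def quadricSum (N n : ℕ) : ZMod 3 :=
  ∑ p ∈ quadricPoints N n with (0 < p.2.2 ∧ p.2.2 < p.2.1) ∧ p.1 < p.2.2, quadricWeight p

lemma sum_quadricWeight_pos (N : ℕ) {n : ℕ} (hn : 3 ∣ n) :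
    ∑ p ∈ quadricPoints N n with 0 < p.2.2 ∧ p.2.2 < p.2.1, quadricWeight p = quadricSum N n := by
  rw [sum_filter_trichotomy _ (fun p => p.1) (fun p => p.2.2)]
  simp only [filter_filter]
  rw [sum_quadricWeight_eq_zero_of_swap, sum_quadricWeight_eq_zero_of_reflect N hn, add_zero,
    add_zero, quadricSum]

lemma sum_quadricWeight_between (N n : ℕ) :
    ∑ p ∈ quadricPoints N n with p.1 < p.2.2 ∧ p.2.2 < p.2.1, quadricWeight p
      = 2 * quadricSum N n := by
  have hpos : ∑ p ∈ quadricPoints N n with (p.1 < p.2.2 ∧ p.2.2 < p.2.1) ∧ 0 < p.2.2,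
      quadricWeight p = quadricSum N n := by
    rw [quadricSum]
    congr 1
    ext p
    simp only [mem_filter]
    tauto
  have hzero : ∑ p ∈ quadricPoints N n with (p.1 < p.2.2 ∧ p.2.2 < p.2.1) ∧ p.2.2 = 0,
      quadricWeight p = 0 :=
    sum_eq_zero fun p hp => by simp [quadricWeight, (mem_filter.1 hp).2.2]
  have hneg : ∑ p ∈ quadricPoints N n with (p.1 < p.2.2 ∧ p.2.2 < p.2.1) ∧ p.2.2 < 0,
      quadricWeight p = quadricSum N n := by
    rw [← hpos]
    refine sum_nbij' (fun p => (-p.2.1, -p.1, -p.2.2)) (fun p => (-p.2.1, -p.1, -p.2.2))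
      ?_ ?_ ?_ ?_ ?_
    · rintro ⟨M, x, k⟩ h
      simp only [mem_filter, mem_quadricPoints] at h ⊢
      grind
    · rintro ⟨M, x, k⟩ h
      simp only [mem_filter, mem_quadricPoints] at h ⊢
      grind
    · simp
    · simp
    · rintro ⟨M, x, k⟩ -
      simp only [quadricWeight]
      push_cast
      ring
  rw [sum_filter_trichotomy _ (fun p => p.2.2) (fun _ => 0)]
  simp only [filter_filter]
  rw [hpos, hzero, hneg]
  ring

/-- The solutions `(M, d, j)` of `M ^ 2 + 2 * d * j = n` with `d, j ≥ 1`, in a box of radius `N`. -/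
noncomputable def divisorPoints (N n : ℕ) : Finset (ℤ × ℕ × ℕ) :=
  (Icc (-N : ℤ) N ×ˢ Icc 1 N ×ˢ Icc 1 N).filter fun p => p.1.natAbs ^ 2 + 2 * p.2.1 * p.2.2 = n

/-- The solutions `(M, r, k)` of `M ^ 2 + r ^ 2 + 2 * r * k = n` with `r, k ≥ 1`, in a box of
radius `N`. -/
noncomputable def shiftedDivisorPoints (N n : ℕ) : Finset (ℤ × ℕ × ℕ) :=
  (Icc (-N : ℤ) N ×ˢ Icc 1 N ×ˢ Icc 1 N).filter
    fun p => p.1.natAbs ^ 2 + (p.2.1 ^ 2 + 2 * p.2.1 * p.2.2) = n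

lemma mem_divisorPoints {N n : ℕ} {M : ℤ} {d j : ℕ} :
    (M, d, j) ∈ divisorPoints N n ↔ ((-N ≤ M ∧ M ≤ N) ∧ (1 ≤ d ∧ d ≤ N) ∧ 1 ≤ j ∧ j ≤ N) ∧
      M ^ 2 + 2 * d * j = (n : ℤ) := by
  simp only [divisorPoints, mem_filter, mem_product, mem_Icc]
  zify
  simp only [sq_abs]

lemma mem_shiftedDivisorPoints {N n : ℕ} {M : ℤ} {r k : ℕ} :
    (M, r, k) ∈ shiftedDivisorPoints N n ↔
      ((-N ≤ M ∧ M ≤ N) ∧ (1 ≤ r ∧ r ≤ N) ∧ 1 ≤ k ∧ k ≤ N) ∧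
      M ^ 2 + (r ^ 2 + 2 * r * k) = (n : ℤ) := by
  simp only [shiftedDivisorPoints, mem_filter, mem_product, mem_Icc]
  zify
  simp only [sq_abs]

lemma abs_add_add_le_sq_add (M : ℤ) {d j : ℤ} (hd : 1 ≤ d) (hj : 1 ≤ j) :
    |M| + d + j ≤ M ^ 2 + 2 * d * j := by
  have hM := Int.natAbs_le_self_sq M
  rw [Int.natCast_natAbs] at hM
  nlinarith [mul_nonneg (sub_nonneg.2 hd) (sub_nonneg.2 hj)]

lemma quadricWeight_eq_one_add_sq_mul {n : ℕ} (hn : 3 ∣ n) {M x k : ℤ}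
    (h : M ^ 2 + x ^ 2 - k ^ 2 = n) :
    quadricWeight (M, x, k) = (1 + M ^ 2) * k ∧
      quadricWeight (M, x, k) = (1 + (M + x - k) ^ 2) * (x - M) := by
  have hcone : (M : ZMod 3) ^ 2 + x ^ 2 = k ^ 2 := by
    have := congrArg (Int.cast : ℤ → ZMod 3) h
    push_cast [(ZMod.natCast_eq_zero_iff n 3).2 hn] at this
    linear_combination this
  simp only [quadricWeight]
  push_cast
  generalize (M : ZMod 3) = M, (x : ZMod 3) = x, (k : ZMod 3) = k at hcone ⊢
  revert M x k
  decide

lemma sum_shiftedDivisorPoints {N n : ℕ} (hn : 3 ∣ n) (hN : n ≤ N) :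
    ∑ p ∈ shiftedDivisorPoints N n, ((1 + p.1 ^ 2) * p.2.2 : ZMod 3) = quadricSum N n := by
  rw [← sum_quadricWeight_pos N hn]
  refine sum_nbij' (fun p => (p.1, p.2.1 + p.2.2, p.2.2))
    (fun p => (p.1, (p.2.1 - p.2.2).toNat, p.2.2.toNat)) ?_ ?_ ?_ ?_ ?_
  · rintro ⟨M, r, k⟩ h
    simp only [mem_filter, mem_quadricPoints, mem_shiftedDivisorPoints] at h ⊢
    have := abs_add_add_le_sq_add M (d := r) (j := k) (by omega) (by omega)
    grind
  · rintro ⟨M, x, k⟩ h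
    simp only [mem_filter, mem_quadricPoints, mem_shiftedDivisorPoints] at h ⊢
    grind
  · rintro ⟨M, r, k⟩ -
    simp
  · rintro ⟨M, x, k⟩ h
    simp only [mem_filter] at h
    grind
  · rintro ⟨M, r, k⟩ h
    rw [mem_shiftedDivisorPoints] at h
    rw [(quadricWeight_eq_one_add_sq_mul hn (by linear_combination h.2)).1, Int.cast_natCast]

lemma sum_divisorPoints_swap (N n : ℕ) :
    ∑ p ∈ divisorPoints N n, ((1 + p.1 ^ 2) * p.2.1 : ZMod 3)
      = ∑ p ∈ divisorPoints N n, ((1 + p.1 ^ 2) * p.2.2 : ZMod 3) := by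
  refine sum_nbij' (fun p => (p.1, p.2.2, p.2.1)) (fun p => (p.1, p.2.2, p.2.1)) ?_ ?_ ?_ ?_ ?_ <;>
    rintro ⟨M, d, j⟩ h <;> simp only [mem_divisorPoints] at h ⊢ <;> grind

-- Writing `m = M - d`, `x = M + j`, `k = M - d + j` turns `M ^ 2 + 2 * d * j` into
-- `m ^ 2 + x ^ 2 - k ^ 2` and `d, j > 0` into `m < k < x`.
lemma sum_divisorPoints_add {N n : ℕ} (hn : 3 ∣ n) (hN : n ≤ N) :
    ∑ p ∈ divisorPoints N n, ((1 + p.1 ^ 2) * (p.2.1 + p.2.2) : ZMod 3) = 2 * quadricSum N n := by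
  rw [← sum_quadricWeight_between N n]
  refine sum_nbij' (fun p => (p.1 - p.2.1, p.1 + p.2.2, p.1 - p.2.1 + p.2.2))
    (fun p => (p.1 + p.2.1 - p.2.2, (p.2.1 - p.2.2).toNat, (p.2.2 - p.1).toNat)) ?_ ?_ ?_ ?_ ?_
  · rintro ⟨M, d, j⟩ h
    simp only [mem_filter, mem_quadricPoints, mem_divisorPoints] at h ⊢
    have := abs_add_add_le_sq_add M (d := d) (j := j) (by omega) (by omega)
    grind
  · rintro ⟨M, x, k⟩ h
    simp only [mem_filter, mem_quadricPoints, mem_divisorPoints] at h ⊢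
    have := abs_add_add_le_sq_add (M + x - k) (d := x - k) (j := k - M) (by omega) (by omega)
    grind
  · rintro ⟨M, d, j⟩ -
    simp
  · rintro ⟨M, x, k⟩ h
    simp only [mem_filter] at h
    grind
  · rintro ⟨M, d, j⟩ h
    rw [mem_divisorPoints] at h
    rw [(quadricWeight_eq_one_add_sq_mul hn (by linear_combination h.2)).2]
    push_cast
    ring

lemma sum_divisorPoints_add_two_mul_sum_shiftedDivisorPoints {N n : ℕ} (hn : 3 ∣ n) (hN : n ≤ N) :
    ∑ p ∈ divisorPoints N n, ((1 + p.1 ^ 2) * p.2.2 : ZMod 3)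
      + 2 * ∑ p ∈ shiftedDivisorPoints N n, ((1 + p.1 ^ 2) * p.2.2 : ZMod 3) = 0 := by
  have hadd := sum_divisorPoints_add hn hN
  simp only [mul_add, sum_add_distrib, sum_divisorPoints_swap] at hadd
  rw [sum_shiftedDivisorPoints hn hN]
  have three : (3 : ZMod 3) = 0 := rfl
  linear_combination 2 * hadd - (∑ p ∈ divisorPoints N n, ((1 + p.1 ^ 2) * p.2.2 : ZMod 3)
    - 2 * quadricSum N n) * three

/-! ### Theta series modulo three -/

lemma coeff_X_mul_derivative {R : Type*} [CommRing R] (f : R⟦X⟧) (n : ℕ) :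
    coeff n (X * d⁄dX R f) = n * coeff n f := by
  cases n with
  | zero => simp
  | succ n => rw [coeff_succ_X_mul, coeff_derivative, mul_comm, Nat.cast_succ]

lemma coeff_mul_eq_coeff {R : Type*} [CommRing R] {G f : R⟦X⟧} {m : ℕ} (hf : coeff 0 f = 1)
    (h : ∀ a b, a + b = m → b ≠ 0 → coeff a G = 0 ∨ coeff b f = 0) :
    coeff m (G * f) = coeff m G := by
  rw [coeff_mul, sum_eq_single (m, 0)]
  · simp [hf]
  · rintro ⟨a, b⟩ hab hne
    rw [HasAntidiagonal.mem_antidiagonal] at hab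
    have hb : b ≠ 0 := by
      rintro rfl
      exact hne (by rw [← hab, add_zero])
    exact mul_eq_zero_of_ne_zero_imp_eq_zero fun hG => (h a b hab hb).resolve_left hG
  · simp

lemma coeff_self_mul_add_derivative (f : (ZMod 3)⟦X⟧) (n : ℕ) :
    coeff n (f * (f + X * d⁄dX (ZMod 3) f)) = (1 + 2 * n) * coeff n (f * f) := by
  have three : (3 : (ZMod 3)⟦X⟧) = 0 := by
    rw [← map_ofNat (C (R := ZMod 3)), show (OfNat.ofNat 3 : ZMod 3) = 0 from rfl, map_zero]
  have h : f * (f + X * d⁄dX (ZMod 3) f) = f * f + 2 * (X * d⁄dX (ZMod 3) (f * f)) := by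
    rw [Derivation.leibniz]
    simp only [smul_eq_mul]
    linear_combination (-f * X * d⁄dX (ZMod 3) f) * three
  rw [h, map_add, two_mul, map_add, coeff_X_mul_derivative]
  ring

lemma coeff_eq_zero_of_mod_three_ne_two {G θ : (ZMod 3)⟦X⟧} {N : ℕ} (hθ : coeff 0 θ = 1)
    (hθ_two : ∀ b, b % 3 = 2 → coeff b θ = 0)
    (h_one : ∀ m ≤ N, m % 3 = 1 → coeff m (G * θ) = 0)
    (h_zero : ∀ m ≤ N, m % 3 = 0 → coeff m (G * (θ * (θ + X * d⁄dX (ZMod 3) θ))) = 0) :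
    ∀ m ≤ N, m % 3 ≠ 2 → coeff m G = 0 := by
  intro m
  induction m using Nat.strong_induction_on with
  | _ m ih =>
  intro hm hmod
  obtain hmod | hmod : m % 3 = 0 ∨ m % 3 = 1 := by omega
  · rw [← h_zero m hm hmod, coeff_mul_eq_coeff]
    · simp [hθ, coeff_mul]
    · intro a b hab hb
      by_cases hb1 : b % 3 = 1
      · right
        rw [coeff_self_mul_add_derivative, ← ZMod.natCast_mod, hb1]
        exact mul_eq_zero_of_left rfl _
      · exact .inl (ih a (by omega) (by omega) (by omega))
  · rw [← h_one m hm hmod, coeff_mul_eq_coeff hθ]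
    intro a b hab hb
    by_cases hb2 : b % 3 = 2
    · exact .inr (hθ_two b hb2)
    · exact .inl (ih a (by omega) (by omega) (by omega))

/-- The theta series `∑ X ^ (M ^ 2)`, truncated to `|M| ≤ N`. -/
noncomputable def theta (R : Type*) [CommRing R] (N : ℕ) : R⟦X⟧ :=
  ∑ M ∈ Icc (-N : ℤ) N, X ^ (M.natAbs ^ 2)

/-- The double Lambert series `∑ j * X ^ (2 * d * j) + 2 * ∑ j * X ^ (d ^ 2 + 2 * d * j)` over
`d, j ≥ 1`, truncated to `d, j ≤ N`. -/
noncomputable def divisorSeries (R : Type*) [CommRing R] (N : ℕ) : R⟦X⟧ :=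
  ∑ p ∈ Icc 1 N ×ˢ Icc 1 N,
    (C (p.2 : R) * X ^ (2 * p.1 * p.2) + C (2 * p.2 : R) * X ^ (p.1 ^ 2 + 2 * p.1 * p.2))

lemma coeff_zero_theta (R : Type*) [CommRing R] (N : ℕ) : coeff 0 (theta R N) = 1 := by
  simp only [theta, map_sum, coeff_X_pow]
  rw [sum_eq_single 0]
  · simp
  · intro M _ hM
    exact if_neg (pow_ne_zero 2 (Int.natAbs_ne_zero.2 hM)).symm
  · simp

lemma coeff_theta_of_mod_three_eq_two (R : Type*) [CommRing R] (N : ℕ) {b : ℕ} (hb : b % 3 = 2) :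
    coeff b (theta R N) = 0 := by
  simp only [theta, map_sum, coeff_X_pow]
  refine sum_eq_zero fun M _ => if_neg ?_
  rintro rfl
  have : M.natAbs % 3 < 3 := Nat.mod_lt _ (by norm_num)
  rw [Nat.pow_mod] at hb
  interval_cases M.natAbs % 3 <;> simp at hb

lemma theta_add_derivative (R : Type*) [CommRing R] (N : ℕ) :
    theta R N + X * d⁄dX R (theta R N)
      = ∑ M ∈ Icc (-N : ℤ) N, C (1 + M ^ 2 : R) * X ^ (M.natAbs ^ 2) := by
  ext n
  rw [map_add, coeff_X_mul_derivative]
  simp only [theta, map_sum, mul_sum, ← sum_add_distrib, coeff_C_mul, coeff_X_pow]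
  refine sum_congr rfl fun M _ => ?_
  split_ifs with h
  · rw [h, ← Int.cast_natCast, Nat.cast_pow, Int.natAbs_sq, Int.cast_pow]
    ring
  · ring

lemma coeff_divisorSeries_mul (R : Type*) [CommRing R] (N n : ℕ) :
    coeff n (divisorSeries R N * (theta R N + X * d⁄dX R (theta R N))) =
      ∑ p ∈ divisorPoints N n, ((1 + p.1 ^ 2) * p.2.2 : R)
      + 2 * ∑ p ∈ shiftedDivisorPoints N n, ((1 + p.1 ^ 2) * p.2.2 : R) := by
  rw [theta_add_derivative, divisorSeries, divisorPoints, shiftedDivisorPoints, mul_comm,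
    sum_mul_sum, ← sum_product', map_sum, sum_filter, sum_filter, mul_sum, ← sum_add_distrib]
  refine sum_congr rfl fun p _ => ?_
  have h (a b : R) (i j : ℕ) :
      coeff n (C a * X ^ i * (C b * X ^ j)) = if i + j = n then a * b else 0 := by
    rw [mul_mul_mul_comm, ← map_mul, ← pow_add, coeff_C_mul, coeff_X_pow]
    simp [eq_comm]
  rw [mul_add, map_add, h, h]
  simp only [mul_ite, mul_zero]
  congr 2
  ring

lemma coeff_divisorSeries (R : Type*) [CommRing R] (N n : ℕ) :
    coeff n (divisorSeries R N) = ∑ p ∈ Icc 1 N ×ˢ Icc 1 N with 2 * p.1 * p.2 = n, (p.2 : R)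
      + ∑ p ∈ Icc 1 N ×ˢ Icc 1 N with p.1 ^ 2 + 2 * p.1 * p.2 = n, (2 * p.2 : R) := by
  simp only [divisorSeries, map_sum, map_add, coeff_C_mul, coeff_X_pow, sum_filter,
    ← sum_add_distrib, mul_ite, mul_one, mul_zero, eq_comm]

lemma coeff_divisorSeries_of_mod_three_eq_one (N : ℕ) {n : ℕ} (hn : n % 3 = 1) :
    coeff n (divisorSeries (ZMod 3) N) = 0 := by
  have hn : (n : ZMod 3) = 1 := by rw [← ZMod.natCast_mod, hn, Nat.cast_one]
  have hswap : ∑ p ∈ Icc 1 N ×ˢ Icc 1 N with 2 * p.1 * p.2 = n, (p.2 : ZMod 3)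
      = ∑ p ∈ Icc 1 N ×ˢ Icc 1 N with 2 * p.1 * p.2 = n, (p.1 : ZMod 3) := by
    refine sum_nbij' Prod.swap Prod.swap ?_ ?_ ?_ ?_ ?_ <;> rintro ⟨d, j⟩ h <;>
      simp only [mem_filter, mem_product, Prod.swap] at h ⊢
    all_goals grind
  have hadd : ∑ p ∈ Icc 1 N ×ˢ Icc 1 N with 2 * p.1 * p.2 = n, (p.1 + p.2 : ZMod 3) = 0 := by
    refine sum_eq_zero fun p hp => ?_
    have h : (2 * p.1 * p.2 : ZMod 3) = 1 := by
      rw [← hn, ← (mem_filter.1 hp).2]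
      push_cast
      rfl
    generalize (p.1 : ZMod 3) = d, (p.2 : ZMod 3) = j at h ⊢
    revert d j
    decide
  have hsq : ∑ p ∈ Icc 1 N ×ˢ Icc 1 N with p.1 ^ 2 + 2 * p.1 * p.2 = n,
      (2 * p.2 : ZMod 3) = 0 := by
    refine sum_eq_zero fun p hp => ?_
    have h : (p.1 ^ 2 + 2 * p.1 * p.2 : ZMod 3) = 1 := by
      rw [← hn, ← (mem_filter.1 hp).2]
      push_cast
      rfl
    generalize (p.1 : ZMod 3) = d, (p.2 : ZMod 3) = j at h ⊢
    revert d j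
    decide
  rw [sum_add_distrib, ← hswap, ← two_mul] at hadd
  rw [coeff_divisorSeries, hsq, add_zero]
  exact (mul_eq_zero.1 hadd).resolve_left (by decide)

theorem coeff_eq_zero_of_mul_theta {G : (ZMod 3)⟦X⟧} {N : ℕ}
    (hG : X ^ (N + 1) ∣ G * theta (ZMod 3) N - divisorSeries (ZMod 3) N) {m : ℕ} (hm : m ≤ N)
    (hmod : m % 3 ≠ 2) : coeff m G = 0 := by
  refine coeff_eq_zero_of_mod_three_ne_two (coeff_zero_theta _ N)
    (fun b => coeff_theta_of_mod_three_eq_two _ N) (fun m hm hmod => ?_)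
    (fun m hm hmod => ?_) m hm hmod
  · rw [← coeff_divisorSeries_of_mod_three_eq_one N hmod, ← sub_eq_zero, ← map_sub]
    exact X_pow_dvd_iff.1 hG m (by omega)
  · have h := coeff_divisorSeries_mul (ZMod 3) N m
    rw [sum_divisorPoints_add_two_mul_sum_shiftedDivisorPoints (Nat.dvd_of_mod_eq_zero hmod) hm]
      at h
    rw [← h, ← sub_eq_zero, ← map_sub, ← mul_assoc, ← sub_mul]
    exact X_pow_dvd_iff.1 (hG.mul_right _) m (by omega)

/-! ### The product of the generating function with theta -/

section Rescale

variable (R : Type*) [CommRing R]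

lemma theta_eq_one_add (N : ℕ) :
    theta R N = 1 + 2 * ∑ r ∈ Icc 1 N, X ^ r ^ 2 := by
  have heven : Function.Even fun M : ℤ => (X : R⟦X⟧) ^ M.natAbs ^ 2 := fun M => by
    simp only [Int.natAbs_neg]
  rw [theta, sum_Icc_of_even_eq_range heven, range_eq_Ico, sum_eq_sum_Ico_succ_bot N.succ_pos,
    zero_add, Nat.succ_eq_add_one, Ico_add_one_right_eq_Icc]
  simp only [Int.natAbs_natCast, Int.natAbs_zero, two_nsmul]
  ring

lemma rescale_neg_one_X_pow_sq (r : ℕ) :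
    rescale (-1 : R) (X ^ r ^ 2) = (-1) ^ r * X ^ r ^ 2 := by
  rw [map_pow, rescale_neg_one_X, neg_pow,
    neg_one_pow_congr (Nat.even_pow' two_ne_zero)]

lemma rescale_neg_one_theta (N : ℕ) :
    rescale (-1) (theta R N) = 1 + 2 * ∑ r ∈ Icc 1 N, (-1) ^ r * X ^ r ^ 2 := by
  simp only [theta_eq_one_add, map_add, map_mul, map_one, map_ofNat, map_sum,
    rescale_neg_one_X_pow_sq]

lemma rescale_neg_one_divisorSeries (N : ℕ) :
    rescale (-1) (divisorSeries R N) = ∑ d ∈ Icc 1 N,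
      (1 + 2 * ((-1) ^ d * X ^ d ^ 2)) * ∑ j ∈ Icc 1 N, C (j : R) * X ^ (2 * d * j) := by
  rw [divisorSeries, sum_product, map_sum]
  refine sum_congr rfl fun d _ => ?_
  rw [map_sum, mul_sum]
  refine sum_congr rfl fun j _ => ?_
  have heven : rescale (-1 : R) (X ^ (2 * d * j)) = X ^ (2 * d * j) := by
    rw [map_pow, rescale_neg_one_X, Even.neg_pow (by simp [mul_assoc])]
  simp only [pow_add, map_add, map_mul, map_natCast, map_ofNat, heven, rescale_neg_one_X_pow_sq]
  ring

end Rescale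

section Congruence

variable (K : Type*) [Field K]

lemma X_pow_dvd_lambertTerm_sub {d : ℕ} (hd : d ≠ 0) (N : ℕ) :
    X ^ (N + 1) ∣ lambertTerm K d - ∑ j ∈ Icc 1 N, C (j : K) * X ^ (2 * d * j) := by
  have h : (X : K⟦X⟧) ^ (N + 1) ∣ X * PowerSeries.mk (fun j => (j + 1 : K))
      - ∑ j ∈ Icc 1 N, C (j : K) * X ^ j := by
    refine X_pow_dvd_iff.2 fun m hm => ?_
    simp only [map_sub, map_sum, coeff_C_mul, coeff_X_pow, mul_ite, mul_one, mul_zero]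
    rw [sum_ite_eq]
    rcases m with - | m
    · simp
    · rw [coeff_succ_X_mul, coeff_mk, if_pos (by grind)]
      simp
  have h := map_dvd (expand (2 * d) (by omega)) h
  simp only [map_pow, map_sub, map_sum, map_mul, expand_X, expand_C, ← pow_mul] at h
  rw [lambertTerm_eq_expand (by omega), map_mul, expand_X]
  exact (pow_dvd_pow _ (by nlinarith [Nat.pos_of_ne_zero hd])).trans h

lemma X_pow_dvd_X_sq_pow_mul_centralRatio_sub {N r : ℕ} (hr : r ≤ N) :
    X ^ (N + 1) ∣ X ^ r ^ 2 * centralRatio K N r - X ^ r ^ 2 := by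
  rw [← mul_sub_one]
  refine (pow_dvd_pow _ ?_).trans (pow_add (X : K⟦X⟧) (r ^ 2) (2 * (N - r + 1)) ▸
    mul_dvd_mul_left _ (X_pow_dvd_centralRatio_sub_one K hr))
  zify [hr]
  nlinarith [sq_nonneg ((r : ℤ) - 1)]

lemma X_pow_dvd_jacobiSum_sub (N : ℕ) :
    X ^ (N + 1) ∣ jacobiSum K N - rescale (-1) (theta K N) := by
  have hdiff : jacobiSum K N - rescale (-1) (theta K N) = 2 * ∑ r ∈ Icc 1 N,
      (-1) ^ r * (X ^ r ^ 2 * centralRatio K N r - X ^ r ^ 2) := by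
    rw [jacobiSum, rescale_neg_one_theta, add_sub_add_left_eq_sub, ← mul_sub, ← sum_sub_distrib]
    simp only [mul_sub, mul_assoc]
  rw [hdiff]
  exact .mul_left (dvd_sum fun r hr =>
    .mul_left (X_pow_dvd_X_sq_pow_mul_centralRatio_sub K (mem_Icc.1 hr).2) _) _

lemma X_pow_dvd_sptSeries_mul_jacobiSum_sub (N : ℕ) :
    X ^ (N + 1) ∣ sptSeries K N * jacobiSum K N - rescale (-1) (divisorSeries K N) := by
  rw [sptSeries_mul_jacobiSum_eq, rescale_neg_one_divisorSeries, ← sum_sub_distrib]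
  refine dvd_sum fun d hd => ?_
  have hd := mem_Icc.1 hd
  set L : K⟦X⟧ := ∑ j ∈ Icc 1 N, C (j : K) * X ^ (2 * d * j)
  have hsplit : (1 + 2 * ((-1) ^ d * X ^ d ^ 2 * centralRatio K N d)) * lambertTerm K d
        - (1 + 2 * ((-1) ^ d * X ^ d ^ 2)) * L
      = 2 * (-1) ^ d * lambertTerm K d * (X ^ d ^ 2 * centralRatio K N d - X ^ d ^ 2)
        + (1 + 2 * ((-1) ^ d * X ^ d ^ 2)) * (lambertTerm K d - L) := by ring
  rw [hsplit]
  exact dvd_add (.mul_left (X_pow_dvd_X_sq_pow_mul_centralRatio_sub K hd.2) _)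
    (.mul_left (X_pow_dvd_lambertTerm_sub K (by omega) N) _)

theorem X_pow_dvd_rescale_sptSeries_mul_theta_sub (N : ℕ) :
    X ^ (N + 1) ∣ rescale (-1) (sptSeries K N) * theta K N - divisorSeries K N := by
  have hinv (f : K⟦X⟧) : rescale (-1) (rescale (-1) f) = f := by
    rw [rescale_rescale, neg_mul_neg, one_mul, rescale_one, RingHom.id_apply]
  have h : X ^ (N + 1) ∣ sptSeries K N * rescale (-1) (theta K N)
      - rescale (-1) (divisorSeries K N) := by
    convert dvd_sub (X_pow_dvd_sptSeries_mul_jacobiSum_sub K N)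
      ((X_pow_dvd_jacobiSum_sub K N).mul_left (sptSeries K N)) using 1
    ring
  have h := map_dvd (rescale (-1 : K)) h
  rw [map_sub, map_mul, hinv, hinv, map_pow, rescale_neg_one_X, neg_pow] at h
  exact (dvd_mul_left _ _).trans h

end Congruence

end Spt2Bar

theorem spt2bar_three_mul_div_three_general {m : ℕ} (hm : m ≠ 0) (hmod : m % 3 ≠ 2) :
    3 ∣ spt2bar m := by
  have hcoeff : PowerSeries.coeff m
      (PowerSeries.rescale (-1) (Spt2Bar.sptSeries (ZMod 3) m)) = 0 :=
    Spt2Bar.coeff_eq_zero_of_mul_theta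
      (Spt2Bar.X_pow_dvd_rescale_sptSeries_mul_theta_sub (ZMod 3) m) le_rfl hmod
  rw [PowerSeries.coeff_rescale, Spt2Bar.coeff_sptSeries hm le_rfl] at hcoeff
  exact (ZMod.natCast_eq_zero_iff _ 3).1
    ((mul_eq_zero.1 hcoeff).resolve_left (pow_ne_zero _ (by decide)))

theorem spt2bar_three_mul_div_three (n : ℕ) (hn : 1 ≤ n) : 3 ∣ spt2bar (3 * n) :=
  spt2bar_three_mul_div_three_general (by omega) (by omega)
end

section
/- For all n ≥ 0, the total number of occurrences of the smallest part among overpartitions of 3n+1 whose smallest part is even and not overlined is divisible by 3. -/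
/-!
Let `S` be the generating function of `spt2bar` and `θ = ∑_{x ∈ ℤ} (-q)^{x²}`. A finite form of
Gauss's identity `∏ (1 - qⁱ) / (1 + qⁱ) = θ` turns `S θ` into the Lambert series
`L = ∑_{r ≥ 1} (1 + 2 (-q)^{r²}) q^{2r} / (1 - q^{2r})²`. Write `D = q d/dq` and work modulo `3`.
Since `x⁴ = x²`, we have `D² θ = D θ`, and therefore `θ³ (D S + D² S)` is a combination of
`D L + D² L` and `ψ L - D² (ψ L)`, where `ψ = θ + D θ`. The first series vanishes because the
coefficient of `q^N` in `L` is zero for `N ≡ 1`, the second because that in `ψ L` is zero for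
`N ≡ 0`. The latter coefficient is a sum over the representations of `N` by the equivalent forms
`x² + 2uv` and `x² + a² - m²`; linear substitutions cut the domain of summation into pieces that
cancel under sign-reversing involutions. Hence `D S + D² S = 0`, and its coefficient at `N ≡ 1` is
`2 spt2bar N`. All series are truncated beyond `q^{2M}`.
-/

open Finset PowerSeries

section FiniteGauss

variable {k : Type*} [Field k]

theorem one_sub_X_pow_mul_inv {m : ℕ} (hm : m ≠ 0) :
    (1 - X ^ m : k⟦X⟧) * (1 - X ^ m)⁻¹ = 1 :=
  PowerSeries.mul_inv_cancel _ (by simp [hm])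

theorem one_add_X_pow_mul_inv {m : ℕ} (hm : m ≠ 0) :
    (1 + X ^ m : k⟦X⟧) * (1 + X ^ m)⁻¹ = 1 :=
  PowerSeries.mul_inv_cancel _ (by simp [hm])

variable (k) in
/-- The finite product `∏_{i = 1}^{2n} (1 - qⁱ) / (1 + qⁱ)`, a truncation of the theta function
`∑_{x ∈ ℤ} (-q)^{x²}`. -/
noncomputable def gaussProduct (n : ℕ) : k⟦X⟧ :=
  ∏ i ∈ range (2 * n), (1 - X ^ (i + 1)) * (1 + X ^ (i + 1))⁻¹

variable (k) in
/-- The quotient of Gaussian binomials `[2n, n - r] / [2n, n]` in base `q²`, written as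
`∏_{i < r} (1 - q^{2(n - i)}) / (1 - q^{2(n + 1 + i)})`. For `r > n` it is zero, because the
truncated subtraction makes the factor `i = n` vanish. -/
noncomputable def binomialRatio (n r : ℕ) : k⟦X⟧ :=
  ∏ i ∈ range r, (1 - X ^ (2 * (n - i))) * (1 - X ^ (2 * (n + 1 + i)))⁻¹

theorem gaussProduct_zero : gaussProduct k 0 = 1 := by
  simp [gaussProduct]

theorem gaussProduct_succ_mul (n : ℕ) :
    gaussProduct k (n + 1) * ((1 + X ^ (2 * n + 1)) * (1 + X ^ (2 * n + 2))) =
      gaussProduct k n * ((1 - X ^ (2 * n + 1)) * (1 - X ^ (2 * n + 2))) := by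
  have h₁ := one_add_X_pow_mul_inv (k := k) (m := 2 * n + 1) (by omega)
  have h₂ := one_add_X_pow_mul_inv (k := k) (m := 2 * n + 2) (by omega)
  rw [gaussProduct, Nat.mul_succ, prod_range_succ, prod_range_succ, ← gaussProduct]
  linear_combination gaussProduct k n * (1 - X ^ (2 * n + 1)) * (1 - X ^ (2 * n + 2)) *
    ((1 + X ^ (2 * n + 2)) * (1 + X ^ (2 * n + 2))⁻¹ * h₁ + h₂)

theorem binomialRatio_zero (n : ℕ) : binomialRatio k n 0 = 1 := rfl

theorem binomialRatio_succ (n r : ℕ) :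
    binomialRatio k n (r + 1) =
      binomialRatio k n r * ((1 - X ^ (2 * (n - r))) * (1 - X ^ (2 * (n + 1 + r)))⁻¹) :=
  prod_range_succ _ _

theorem binomialRatio_eq_zero {n r : ℕ} (h : n < r) : binomialRatio k n r = 0 :=
  prod_eq_zero (mem_range.2 h) (by simp)

theorem binomialRatio_succ_succ (n r : ℕ) :
    binomialRatio k (n + 1) (r + 1) = (1 - X ^ (2 * n + 2)) ^ 2 *
      ((1 - X ^ (2 * (n + 1 + r)))⁻¹ * (1 - X ^ (2 * (n + 2 + r)))⁻¹) * binomialRatio k n r := by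
  induction r with
  | zero =>
    have h := one_sub_X_pow_mul_inv (k := k) (m := 2 * n + 2) (by omega)
    simp only [binomialRatio_succ, binomialRatio_zero, Nat.sub_zero, add_zero, mul_add_one]
    linear_combination -(1 - X ^ (2 * n + 2)) * (1 - X ^ (2 * n + 2 + 2))⁻¹ * h
  | succ r ih =>
    rw [binomialRatio_succ, ih, binomialRatio_succ n r]
    rw [Nat.add_sub_add_right, show n + 1 + (r + 1) = n + 2 + r by ring,
      show n + 1 + 1 + (r + 1) = n + 2 + (r + 1) by ring]
    ring

theorem binomialRatio_succ_mul (n r : ℕ) :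
    binomialRatio k (n + 1) r * ((1 - X ^ (2 * (n + 1 - r))) * (1 - X ^ (2 * (n + 1 + r)))) =
      (1 - X ^ (2 * n + 2)) ^ 2 * binomialRatio k n r := by
  have h := binomialRatio_succ_succ (k := k) n r
  rw [binomialRatio_succ] at h
  have h₁ := one_sub_X_pow_mul_inv (k := k) (m := 2 * (n + 1 + r)) (by omega)
  have h₂ := one_sub_X_pow_mul_inv (k := k) (m := 2 * (n + 2 + r)) (by omega)
  rw [show n + 1 + 1 + r = n + 2 + r by ring] at h
  linear_combination (1 - X ^ (2 * (n + 2 + r))) * (1 - X ^ (2 * (n + 1 + r))) * h -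
    binomialRatio k (n + 1) r * (1 - X ^ (2 * (n + 1 - r))) * (1 - X ^ (2 * (n + 1 + r))) * h₂ +
    (1 - X ^ (2 * n + 2)) ^ 2 * binomialRatio k n r *
      ((1 - X ^ (2 * (n + 2 + r))) * (1 - X ^ (2 * (n + 2 + r)))⁻¹ * h₁ + h₂)

variable (k) in
/-- A telescoping certificate in the style of Wilf and Zeilberger: its difference in `r` is the
defect of the `r`-th term of `gaussProduct_eq_sum` under the recurrence in `n`. -/
noncomputable def gaussCertificate (n r : ℕ) : k⟦X⟧ :=
  X ^ (2 * n + 1) * (1 - X ^ (2 * n + 2)) * (1 + X ^ (2 * r + 1)) *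
    (1 - X ^ (2 * (n + 1 + r)))⁻¹ * ((-X) ^ r ^ 2 * binomialRatio k n r)

theorem gaussCertificate_sub (n r : ℕ) :
    (1 + X ^ (2 * n + 1)) * (1 + X ^ (2 * n + 2)) *
        ((-X) ^ (r + 1) ^ 2 * binomialRatio k (n + 1) (r + 1)) -
      (1 - X ^ (2 * n + 1)) * (1 - X ^ (2 * n + 2)) *
        ((-X) ^ (r + 1) ^ 2 * binomialRatio k n (r + 1)) =
      gaussCertificate k n (r + 1) - gaussCertificate k n r := by
  obtain hr | hr := le_or_gt r n
  · obtain ⟨d, rfl⟩ := Nat.exists_eq_add_of_le hr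
    have hD := one_sub_X_pow_mul_inv (k := k) (m := 2 * (r + d + 2 + r)) (by omega)
    have hsign : (-X : k⟦X⟧) ^ (r + 1) ^ 2 = -((-X) ^ r ^ 2 * X ^ (2 * r + 1)) := by
      rw [add_sq, one_pow, mul_one, add_assoc, pow_add, Odd.neg_pow ⟨r, rfl⟩, mul_neg]
    rw [gaussCertificate, gaussCertificate, binomialRatio_succ_succ, binomialRatio_succ, hsign,
      show r + d + 1 + (r + 1) = r + d + 2 + r by ring, Nat.add_sub_cancel_left]
    generalize (1 - X ^ (2 * (r + d + 2 + r)) : k⟦X⟧)⁻¹ = j at *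
    generalize (1 - X ^ (2 * (r + d + 1 + r)) : k⟦X⟧)⁻¹ = i at *
    linear_combination -((1 - X ^ (2 * (r + d) + 2)) * i * (-X) ^ r ^ 2 *
      binomialRatio k (r + d) r * (
        (1 - X ^ (2 * (r + d) + 1)) * X ^ (2 * r + 1) * (1 - X ^ (2 * d)) +
        X ^ (2 * (r + d) + 1) * (1 + X ^ (2 * r + 1)))) * hD
  · simp only [gaussCertificate, binomialRatio_eq_zero hr,
      binomialRatio_eq_zero (hr.trans r.lt_succ_self),
      binomialRatio_eq_zero (Nat.succ_lt_succ hr), mul_zero, sub_zero]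

theorem gaussProduct_eq_sum {n L : ℕ} (hL : n ≤ L) :
    gaussProduct k n = 1 + 2 * ∑ r ∈ range L, (-X) ^ (r + 1) ^ 2 * binomialRatio k n (r + 1) := by
  induction n with
  | zero =>
    rw [gaussProduct_zero, sum_eq_zero fun r _ ↦ ?_, mul_zero, add_zero]
    rw [binomialRatio_eq_zero r.succ_pos, mul_zero]
  | succ n ih =>
    have htel := sum_range_sub (gaussCertificate k n) L
    simp only [← gaussCertificate_sub, sum_sub_distrib, ← mul_sum] at htel
    have hend : gaussCertificate k n L = 0 := by
      rw [gaussCertificate, binomialRatio_eq_zero hL, mul_zero, mul_zero]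
    have hstart : gaussCertificate k n 0 = X ^ (2 * n + 1) + X ^ (2 * n + 2) := by
      have h := one_sub_X_pow_mul_inv (k := k) (m := 2 * (n + 1)) (by omega)
      simp only [gaussCertificate, binomialRatio_zero]
      linear_combination X ^ (2 * n + 1) * (1 + X) * h
    have hsucc := gaussProduct_succ_mul (k := k) n
    rw [ih (Nat.le_of_succ_le hL)] at hsucc
    refine mul_right_cancel₀ (b := (1 + X ^ (2 * n + 1)) * (1 + X ^ (2 * n + 2))) ?_ ?_
    · exact mul_ne_zero (left_ne_zero_of_mul_eq_one (one_add_X_pow_mul_inv (by omega)))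
        (left_ne_zero_of_mul_eq_one (one_add_X_pow_mul_inv (by omega)))
    · linear_combination hsucc - 2 * htel - 2 * hend + 2 * hstart

variable (k) in
/-- The Lambert-type term `q^m / (1 - q^m)² = ∑_{u ≥ 1} u q^{mu}`. -/
noncomputable def lambertTerm (m : ℕ) : k⟦X⟧ :=
  X ^ m * ((1 - X ^ m)⁻¹) ^ 2

theorem lambertTerm_mul {m : ℕ} (hm : m ≠ 0) : lambertTerm k m * (1 - X ^ m) ^ 2 = X ^ m := by
  rw [lambertTerm, mul_assoc, ← mul_pow, mul_comm (_⁻¹), one_sub_X_pow_mul_inv hm, one_pow, mul_one]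

theorem lambertTerm_mul_sub (n : ℕ) {r : ℕ} (hr : r ≠ 0) :
    lambertTerm k (2 * r) * (binomialRatio k (n + 1) r - binomialRatio k n r) =
      lambertTerm k (2 * (n + 1)) * binomialRatio k (n + 1) r := by
  obtain hn | hn := lt_or_ge (n + 1) r
  · rw [binomialRatio_eq_zero hn, binomialRatio_eq_zero (n.lt_succ_self.trans hn), sub_zero,
      mul_zero, mul_zero]
  obtain ⟨d, hd⟩ := Nat.exists_eq_add_of_le hn
  have h := binomialRatio_succ_mul (k := k) n r
  have hT := lambertTerm_mul (k := k) (m := 2 * r) (by omega)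
  have hU := lambertTerm_mul (k := k) (m := 2 * (n + 1)) (by omega)
  refine mul_right_cancel₀ (b := (1 - X ^ (2 * (n + 1)) : k⟦X⟧) ^ 2)
    (pow_ne_zero _ (left_ne_zero_of_mul_eq_one (one_sub_X_pow_mul_inv (by omega)))) ?_
  rw [show 2 * n + 2 = 2 * (n + 1) by ring] at h
  rw [hd, Nat.add_sub_cancel_left] at h
  rw [hd] at hU ⊢
  linear_combination lambertTerm k (2 * r) * h + binomialRatio k (r + d) r * X ^ (2 * d) * hT -
    binomialRatio k (r + d) r * hU

theorem sum_lambertTerm_mul_gaussProduct (M : ℕ) :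
    ∑ n ∈ range M, lambertTerm k (2 * (n + 1)) * gaussProduct k (n + 1) =
      ∑ n ∈ range M, lambertTerm k (2 * (n + 1)) + 2 * ∑ r ∈ range M,
        (-X) ^ (r + 1) ^ 2 * (lambertTerm k (2 * (r + 1)) * binomialRatio k M (r + 1)) := by
  induction M with
  | zero => simp
  | succ M ih =>
    have hstep : ∑ r ∈ range (M + 1), (-X) ^ (r + 1) ^ 2 *
          (lambertTerm k (2 * (r + 1)) * binomialRatio k (M + 1) (r + 1)) =
        ∑ r ∈ range M, (-X) ^ (r + 1) ^ 2 *
          (lambertTerm k (2 * (r + 1)) * binomialRatio k M (r + 1)) +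
        lambertTerm k (2 * (M + 1)) *
          ∑ r ∈ range (M + 1), (-X) ^ (r + 1) ^ 2 * binomialRatio k (M + 1) (r + 1) := by
      trans ∑ r ∈ range (M + 1), (-X) ^ (r + 1) ^ 2 *
          (lambertTerm k (2 * (r + 1)) * binomialRatio k M (r + 1)) +
        lambertTerm k (2 * (M + 1)) *
          ∑ r ∈ range (M + 1), (-X) ^ (r + 1) ^ 2 * binomialRatio k (M + 1) (r + 1)
      · rw [mul_sum, ← sum_add_distrib]
        refine sum_congr rfl fun r _ ↦ ?_
        linear_combination (-X) ^ (r + 1) ^ 2 * lambertTerm_mul_sub (k := k) M r.succ_ne_zero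
      · rw [sum_range_succ _ M, binomialRatio_eq_zero M.lt_succ_self, mul_zero, mul_zero, add_zero]
    rw [sum_range_succ, sum_range_succ, ih, hstep, gaussProduct_eq_sum le_rfl]
    ring

theorem X_pow_dvd_binomialRatio_sub_one {n r : ℕ} (h : r ≤ n) :
    X ^ (2 * (n - r) + 2) ∣ binomialRatio k n r - 1 := by
  induction r with
  | zero => simp [binomialRatio_zero]
  | succ r ih =>
    have hinv := one_sub_X_pow_mul_inv (k := k) (m := 2 * (n + 1 + r)) (by omega)
    have hfactor : X ^ (2 * (n - r)) ∣
        (1 - X ^ (2 * (n - r)) : k⟦X⟧) * (1 - X ^ (2 * (n + 1 + r)))⁻¹ - 1 := by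
      rw [show 2 * (n + 1 + r) = 2 * (n - r) + 2 * (2 * r + 1) by omega, pow_add] at hinv ⊢
      exact ⟨(X ^ (2 * (2 * r + 1)) - 1) * (1 - X ^ (2 * (n - r)) * X ^ (2 * (2 * r + 1)))⁻¹,
        by linear_combination hinv⟩
    rw [show 2 * (n - (r + 1)) + 2 = 2 * (n - r) by omega, binomialRatio_succ]
    have hprev := (pow_dvd_pow X (Nat.le_add_right _ 2)).trans (ih (Nat.le_of_succ_le h))
    rw [← sub_add_sub_cancel _ ((1 - X ^ (2 * (n - r))) * (1 - X ^ (2 * (n + 1 + r)))⁻¹) 1,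
      ← sub_one_mul]
    exact dvd_add (hprev.mul_right _) hfactor

theorem X_pow_dvd_pow_sq_mul_binomialRatio_sub_one {n r : ℕ} (h : r ≤ n) :
    X ^ (2 * n + 1) ∣ (-X) ^ r ^ 2 * (binomialRatio k n r - 1) := by
  have hexp : 2 * n + 1 ≤ r ^ 2 + (2 * (n - r) + 2) := by
    obtain ⟨d, rfl⟩ := Nat.exists_eq_add_of_le h
    rw [Nat.add_sub_cancel_left]
    nlinarith [sq_nonneg ((r : ℤ) - 1)]
  refine (pow_dvd_pow X hexp).trans ?_
  rw [pow_add, neg_pow, mul_assoc]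
  exact (mul_dvd_mul_left _ (X_pow_dvd_binomialRatio_sub_one h)).mul_left _

variable (k) in
/-- The partial sum `∑_{|x| ≤ M} (-q)^{x²}` of the theta function. -/
noncomputable def partialTheta (M : ℕ) : k⟦X⟧ :=
  ∑ x ∈ Icc (-M : ℤ) M, (-X) ^ x.natAbs ^ 2

theorem partialTheta_eq (M : ℕ) :
    partialTheta k M = 1 + 2 * ∑ r ∈ range M, (-X) ^ (r + 1) ^ 2 := by
  have heven : (fun x : ℤ ↦ (-X : k⟦X⟧) ^ x.natAbs ^ 2).Even := fun x ↦ by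
    simp only [Int.natAbs_neg]
  rw [partialTheta, sum_Icc_of_even_eq_range heven, sum_range_succ']
  simp only [Int.natAbs_natCast]
  simp only [Int.natAbs_zero, ne_eq, OfNat.ofNat_ne_zero, not_false_eq_true, zero_pow, pow_zero,
    two_nsmul]
  ring

theorem X_pow_dvd_gaussProduct_sub_partialTheta (M : ℕ) :
    X ^ (2 * M + 1) ∣ gaussProduct k M - partialTheta k M := by
  have h : gaussProduct k M - partialTheta k M =
      2 * ∑ r ∈ range M, (-X) ^ (r + 1) ^ 2 * (binomialRatio k M (r + 1) - 1) := by
    rw [gaussProduct_eq_sum le_rfl, partialTheta_eq]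
    simp only [mul_sub, sum_sub_distrib, mul_one]
    ring
  rw [h]
  exact (dvd_sum fun r hr ↦ X_pow_dvd_pow_sq_mul_binomialRatio_sub_one (mem_range.1 hr)).mul_left _

theorem X_pow_dvd_lambertTerm_sub_sum {m : ℕ} (hm : m ≠ 0) (M : ℕ) :
    X ^ (m * (M + 1)) ∣ lambertTerm k m - ∑ u ∈ Icc 1 M, (u : k⟦X⟧) * X ^ (m * u) := by
  have hsum : (1 - X ^ m : k⟦X⟧) ^ 2 * ∑ u ∈ Icc 1 M, (u : k⟦X⟧) * X ^ (m * u) =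
      X ^ m - X ^ (m * (M + 1)) * ((M : k⟦X⟧) + 1 - (M : k⟦X⟧) * X ^ m) := by
    induction M with
    | zero => simp
    | succ M ih =>
      rw [sum_Icc_succ_top (by omega), mul_add, ih]
      push_cast
      ring
  have hinv := one_sub_X_pow_mul_inv (k := k) hm
  refine ⟨((M : k⟦X⟧) + 1 - (M : k⟦X⟧) * X ^ m) * ((1 - X ^ m : k⟦X⟧)⁻¹) ^ 2, ?_⟩
  rw [lambertTerm]
  linear_combination (-((1 - X ^ m)⁻¹) ^ 2) * hsum +
    ((1 - X ^ m) * (1 - X ^ m)⁻¹ + 1) * (∑ u ∈ Icc 1 M, (u : k⟦X⟧) * X ^ (m * u)) * hinv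

variable (k) in
/-- The polynomial `∑_{1 ≤ r, u ≤ M} u ((-q)^{2ru} + 2 (-q)^{r² + 2ru})`, a truncation of the
Lambert series `∑_r (1 + 2 (-q)^{r²}) q^{2r} / (1 - q^{2r})²`. -/
noncomputable def partialLambert (M : ℕ) : k⟦X⟧ :=
  ∑ r ∈ Icc 1 M, ∑ u ∈ Icc 1 M,
    (u : k⟦X⟧) * ((-X) ^ (2 * r * u) + 2 * (-X) ^ (r ^ 2 + 2 * r * u))

theorem X_pow_dvd_sub_partialLambert (M : ℕ) :
    X ^ (2 * M + 1) ∣ ∑ n ∈ range M, lambertTerm k (2 * (n + 1)) * gaussProduct k (n + 1) -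
      partialLambert k M := by
  have hinner (r : ℕ) : ∑ u ∈ Icc 1 M, (u : k⟦X⟧) * ((-X) ^ (2 * r * u) +
      2 * (-X) ^ (r ^ 2 + 2 * r * u)) =
      (1 + 2 * (-X) ^ r ^ 2) * ∑ u ∈ Icc 1 M, (u : k⟦X⟧) * X ^ (2 * r * u) := by
    rw [mul_sum]
    refine sum_congr rfl fun u _ ↦ ?_
    rw [pow_add, mul_assoc 2 r u, (even_two_mul _).neg_pow]
    ring
  rw [sum_lambertTerm_mul_gaussProduct, partialLambert, sum_congr rfl fun r _ ↦ hinner r,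
    ← Ico_add_one_right_eq_Icc, sum_Ico_eq_sum_range, Nat.add_sub_cancel, mul_sum,
    ← sum_add_distrib, ← sum_sub_distrib]
  refine dvd_sum fun r hr ↦ ?_
  rw [add_comm 1 r]
  have hT := (pow_dvd_pow X (show 2 * M + 1 ≤ 2 * (r + 1) * (M + 1) by nlinarith)).trans
    (X_pow_dvd_lambertTerm_sub_sum (k := k) (m := 2 * (r + 1)) (by omega) M)
  have hG := X_pow_dvd_pow_sq_mul_binomialRatio_sub_one (k := k) (r := r + 1) (mem_range.1 hr)
  convert dvd_add (hT.mul_left (1 + 2 * (-X) ^ (r + 1) ^ 2))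
    (hG.mul_left (2 * lambertTerm k (2 * (r + 1)))) using 1
  rw [Ico_add_one_right_eq_Icc]
  ring

end FiniteGauss

section SptSeries

variable {k : Type*} [Field k]

variable (k) in
/-- The sum over even `m ≤ 2M` of the generating function of overpartitions with smallest part `m`,
`m` not overlined, and parts at most `2M`, each counted with the multiplicity of `m`. -/
noncomputable def sptSeries (M : ℕ) : k⟦X⟧ :=
  ∑ j ∈ range M, lambertTerm k (2 * (j + 1)) *
    ∏ i ∈ Ico (2 * (j + 1)) (2 * M), (1 + X ^ (i + 1)) * (1 - X ^ (i + 1))⁻¹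

theorem prod_Ico_mul_gaussProduct {j M : ℕ} (h : j ≤ M) :
    (∏ i ∈ Ico (2 * j) (2 * M), (1 + X ^ (i + 1)) * (1 - X ^ (i + 1))⁻¹) * gaussProduct k M =
      gaussProduct k j := by
  rw [gaussProduct, ← prod_range_mul_prod_Ico _ (Nat.mul_le_mul_left 2 h), mul_left_comm,
    ← gaussProduct, ← prod_mul_distrib, prod_eq_one, mul_one]
  intro i _
  have h₁ := one_add_X_pow_mul_inv (k := k) (m := i + 1) i.succ_ne_zero
  have h₂ := one_sub_X_pow_mul_inv (k := k) (m := i + 1) i.succ_ne_zero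
  linear_combination (1 - X ^ (i + 1)) * (1 - X ^ (i + 1))⁻¹ * h₁ + h₂

theorem X_pow_dvd_sptSeries_mul_partialTheta_sub (M : ℕ) :
    X ^ (2 * M + 1) ∣ sptSeries k M * partialTheta k M - partialLambert k M := by
  have hprod : sptSeries k M * gaussProduct k M =
      ∑ n ∈ range M, lambertTerm k (2 * (n + 1)) * gaussProduct k (n + 1) := by
    rw [sptSeries, sum_mul]
    refine sum_congr rfl fun n hn ↦ ?_
    rw [mul_assoc, prod_Ico_mul_gaussProduct (mem_range.1 hn)]
  have h := dvd_sub (X_pow_dvd_sub_partialLambert (k := k) M)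
    ((X_pow_dvd_gaussProduct_sub_partialTheta M).mul_left (sptSeries k M))
  rw [← hprod] at h
  convert h using 1
  ring

end SptSeries

section GeneratingFunction

variable {k : Type*} [Field k]

/-- The weight of a part `i` occurring `c > 0` times when enumerating the partitions with parts in
`[m, L]`: the part `m` has weight `w c`, every larger one weight `2` (overlined or not). -/
def smallestPartWeight (w : ℕ → k) (m L i c : ℕ) : k :=
  if i = m then w c else if m < i ∧ i ≤ L then 2 else 0

section Topology

open scoped PowerSeries.WithPiTopology

variable [TopologicalSpace k] [IsTopologicalRing k] [T2Space k]

theorem tsum_smul_X_pow_eq_add (g : ℕ → k) {m : ℕ} (hm : m ≠ 0) :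
    ∑' j, g j • (X : k⟦X⟧) ^ (m * (j + 1)) =
      g 0 • X ^ m + X ^ m * ∑' j, g (j + 1) • X ^ (m * (j + 1)) := by
  have hsum (g : ℕ → k) := Nat.Partition.summable_genFun_term' (fun _ c ↦ g (c - 1)) hm
  simp only [Nat.add_sub_cancel] at hsum
  rw [(hsum g).tsum_eq_zero_add, zero_add, mul_one, ← (hsum _).tsum_mul_left]
  simp only [mul_smul_comm, ← pow_add, mul_add_one, add_comm m]

theorem tsum_const_smul_X_pow (c : k) {m : ℕ} (hm : m ≠ 0) :
    ∑' j, c • (X : k⟦X⟧) ^ (m * (j + 1)) = c • (X ^ m * (1 - X ^ m)⁻¹) := by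
  have h := tsum_smul_X_pow_eq_add (fun _ ↦ c) hm
  have hinv := one_sub_X_pow_mul_inv (k := k) hm
  rw [smul_eq_C_mul] at h ⊢
  linear_combination (1 - X ^ m)⁻¹ * h - (∑' j, c • (X : k⟦X⟧) ^ (m * (j + 1))) * hinv

theorem tsum_succ_smul_X_pow {m : ℕ} (hm : m ≠ 0) :
    ∑' j : ℕ, ((j + 1 : ℕ) : k) • (X : k⟦X⟧) ^ (m * (j + 1)) = lambertTerm k m := by
  have h := tsum_smul_X_pow_eq_add (fun j ↦ ((j + 1 : ℕ) : k)) hm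
  have hone := tsum_const_smul_X_pow (1 : k) hm
  have hinv := one_sub_X_pow_mul_inv (k := k) hm
  have hshift : ∑' j : ℕ, ((j + 1 + 1 : ℕ) : k) • (X : k⟦X⟧) ^ (m * (j + 1)) =
      ∑' j : ℕ, ((j + 1 : ℕ) : k) • (X : k⟦X⟧) ^ (m * (j + 1)) + X ^ m * (1 - X ^ m)⁻¹ := by
    rw [← one_smul k (X ^ m * _), ← tsum_const_smul_X_pow 1 hm,
      ← (Nat.Partition.summable_genFun_term' (fun _ c ↦ (c : k)) hm).tsum_add
        (Nat.Partition.summable_genFun_term' (fun _ _ ↦ (1 : k)) hm)]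
    simp only [Nat.cast_add_one (_ + 1), add_smul]
  rw [hshift, zero_add, Nat.cast_one, one_smul] at h
  rw [lambertTerm]
  linear_combination (1 - X ^ m)⁻¹ * h - (X ^ m * (1 - X ^ m)⁻¹ +
    ∑' j : ℕ, ((j + 1 : ℕ) : k) • (X : k⟦X⟧) ^ (m * (j + 1))) * hinv

theorem genFun_smallestPartWeight (w : ℕ → k) {m L : ℕ} (hm : m ≠ 0) (hmL : m ≤ L) :
    Nat.Partition.genFun (smallestPartWeight w m L) =
      (1 + ∑' c, w (c + 1) • X ^ (m * (c + 1))) *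
        ∏ i ∈ Ico m L, (1 + X ^ (i + 1)) * (1 - X ^ (i + 1))⁻¹ := by
  have hbig {i : ℕ} (hi : i ∈ Ico m L) :
      (1 + ∑' c, smallestPartWeight w m L (i + 1) (c + 1) • (X : k⟦X⟧) ^ ((i + 1) * (c + 1))) =
        (1 + X ^ (i + 1)) * (1 - X ^ (i + 1))⁻¹ := by
    rw [mem_Ico] at hi
    have hw (c : ℕ) : smallestPartWeight w m L (i + 1) (c + 1) = 2 := by
      rw [smallestPartWeight, if_neg (by omega), if_pos (by omega)]
    have hinv := one_sub_X_pow_mul_inv (k := k) (m := i + 1) i.succ_ne_zero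
    simp only [hw]
    rw [tsum_const_smul_X_pow (m := i + 1) _ i.succ_ne_zero, ofNat_smul_eq_nsmul, nsmul_eq_mul,
      Nat.cast_ofNat]
    linear_combination -hinv
  have hone {i : ℕ} (hi : i + 1 ≠ m) (hi' : i ∉ Ico m L) :
      (1 + ∑' c, smallestPartWeight w m L (i + 1) (c + 1) • (X : k⟦X⟧) ^ ((i + 1) * (c + 1))) =
        1 := by
    rw [mem_Ico] at hi'
    have hw (c : ℕ) : smallestPartWeight w m L (i + 1) (c + 1) = 0 := by
      rw [smallestPartWeight, if_neg hi, if_neg (by omega)]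
    simp only [hw, zero_smul, tsum_zero, add_zero]
  obtain ⟨m, rfl⟩ := Nat.exists_eq_succ_of_ne_zero hm
  rw [Nat.Partition.genFun_eq_tprod, tprod_eq_prod (s := range L) fun i hi ↦ hone ?_ ?_,
    ← prod_range_mul_prod_Ico _ hmL, prod_range_succ, prod_congr rfl fun i hi ↦ hbig hi,
    prod_eq_one fun i hi ↦ hone ?_ ?_, one_mul]
  · simp only [smallestPartWeight, if_pos]
  all_goals simp only [mem_range, mem_Ico] at *; omega

end Topology

theorem genFun_smallestPartWeight_sub {m L : ℕ} (hm : m ≠ 0) (hmL : m ≤ L) :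
    Nat.Partition.genFun (smallestPartWeight (Nat.cast : ℕ → k) m L) -
      Nat.Partition.genFun (smallestPartWeight (0 : ℕ → k) m L) =
      lambertTerm k m * ∏ i ∈ Ico m L, (1 + X ^ (i + 1)) * (1 - X ^ (i + 1))⁻¹ := by
  let : TopologicalSpace k := ⊥
  have : DiscreteTopology k := ⟨rfl⟩
  rw [genFun_smallestPartWeight _ hm hmL, genFun_smallestPartWeight _ hm hmL, ← sub_mul,
    tsum_succ_smul_X_pow hm]
  simp only [Pi.zero_apply, zero_smul, tsum_zero, add_zero, add_sub_cancel_left]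

theorem smallestPart_mem {n : ℕ} (p : n.Partition) (hn : n ≠ 0) : smallestPart p ∈ p.parts := by
  refine Nat.sInf_mem (Multiset.exists_mem_of_ne_zero fun h ↦ hn ?_)
  rw [← p.parts_sum, h, Multiset.sum_zero]

theorem smallestPart_le {n : ℕ} {p : n.Partition} {i : ℕ} (hi : i ∈ p.parts) :
    smallestPart p ≤ i :=
  Nat.sInf_le hi

theorem toFinsupp_prod_smallestPartWeight_sub {n : ℕ} (hn : n ≠ 0) (p : n.Partition) {m L : ℕ}
    (hL : n ≤ L) :
    p.parts.toFinsupp.prod (smallestPartWeight (Nat.cast : ℕ → k) m L) -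
      p.parts.toFinsupp.prod (smallestPartWeight (0 : ℕ → k) m L) =
      if smallestPart p = m then (p.parts.count m : k) * 2 ^ (#p.parts.toFinset - 1) else 0 := by
  simp only [Finsupp.prod, Multiset.toFinsupp_support, Multiset.toFinsupp_apply]
  by_cases hm : m ∈ p.parts
  · have hm' := Multiset.mem_toFinset.2 hm
    rw [← mul_prod_erase _ _ hm', ← mul_prod_erase _ _ hm', ← card_erase_of_mem hm']
    simp only [smallestPartWeight, if_pos, Pi.zero_apply, zero_mul, sub_zero]
    split_ifs with hs
    · refine congrArg _ (prod_eq_pow_card fun i hi ↦ ?_)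
      obtain ⟨hi, hip⟩ := mem_erase.1 hi
      rw [Multiset.mem_toFinset] at hip
      have hle := smallestPart_le hip
      have hin := p.parts_sum ▸ Multiset.le_sum_of_mem hip
      rw [if_neg hi, if_pos (by omega)]
    · have hlt := lt_of_le_of_ne (smallestPart_le hm) hs
      refine mul_eq_zero_of_right _ (prod_eq_zero (i := smallestPart p) ?_ ?_)
      · exact mem_erase.2 ⟨hs, Multiset.mem_toFinset.2 (smallestPart_mem p hn)⟩
      · rw [if_neg hs, if_neg (by omega)]
  · rw [if_neg (ne_of_mem_of_not_mem (smallestPart_mem p hn) hm), sub_eq_zero]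
    refine prod_congr rfl fun i hi ↦ ?_
    have hi : i ≠ m := fun h ↦ hm (h ▸ Multiset.mem_toFinset.1 hi)
    rw [smallestPartWeight, smallestPartWeight, if_neg hi, if_neg hi]

theorem spt2bar_eq_sum_partition {n : ℕ} (hn : n ≠ 0) :
    spt2bar n = ∑ p : n.Partition, if Even (smallestPart p) then
      p.parts.count (smallestPart p) * 2 ^ (#p.parts.toFinset - 1) else 0 := by
  classical
  let (p : n.Partition) : Fintype {s : Finset ℕ // s ⊆ p.parts.toFinset} :=
    Fintype.subtype p.parts.toFinset.powerset fun _ ↦ mem_powerset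
  have hsigma : spt2bar n = ∑ p : n.Partition, ∑ t : {s : Finset ℕ // s ⊆ p.parts.toFinset},
      if Even (smallestPart p) ∧ smallestPart p ∉ t.1 then
        p.parts.count (smallestPart p) else 0 := by
    rw [spt2bar, ← Fintype.sum_sigma']
    exact Fintype.sum_equiv (Equiv.refl _) _ _ fun _ ↦ if_congr Iff.rfl rfl rfl
  rw [hsigma]
  refine sum_congr rfl fun p _ ↦ ?_
  have hs := Multiset.mem_toFinset.2 (smallestPart_mem p hn)
  rw [← sum_subtype p.parts.toFinset.powerset (fun _ ↦ mem_powerset) fun t ↦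
    if Even (smallestPart p) ∧ smallestPart p ∉ t then p.parts.count (smallestPart p) else 0]
  split_ifs with he
  · have hfilter : {t ∈ p.parts.toFinset.powerset | smallestPart p ∉ t} =
        (p.parts.toFinset.erase (smallestPart p)).powerset := by
      ext t
      rw [mem_filter, mem_powerset, mem_powerset, subset_erase]
    simp only [he, true_and]
    rw [← sum_filter, hfilter, sum_const, card_powerset, card_erase_of_mem hs, smul_eq_mul,
      mul_comm]
  · simp only [he, false_and, if_false, sum_const_zero]

theorem coeff_sptSeries {n M : ℕ} (hn : n ≠ 0) (hM : n ≤ 2 * M) :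
    coeff n (sptSeries k M) = spt2bar n := by
  have hterm (j : ℕ) (hj : j ∈ range M) := genFun_smallestPartWeight_sub (k := k)
    (Nat.mul_ne_zero two_ne_zero j.succ_ne_zero) (Nat.mul_le_mul_left 2 (mem_range.1 hj))
  rw [sptSeries, ← sum_congr rfl hterm, map_sum, spt2bar_eq_sum_partition hn, Nat.cast_sum]
  simp only [map_sub, Nat.Partition.coeff_genFun, ← sum_sub_distrib,
    toFinsupp_prod_smallestPartWeight_sub hn _ hM]
  rw [sum_comm]
  refine sum_congr rfl fun p _ ↦ ?_
  have hs := smallestPart_mem p hn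
  have hpos := p.parts_pos hs
  have hle := (p.parts_sum ▸ Multiset.le_sum_of_mem hs).trans hM
  split_ifs with he
  · obtain ⟨j, hj⟩ := he.two_dvd
    rw [sum_eq_single_of_mem (j - 1) (mem_range.2 (by omega)) fun i _ hi ↦ if_neg (by omega),
      if_pos (by omega)]
    rw [show 2 * (j - 1).succ = smallestPart p by omega]
    push_cast
    rfl
  · rw [Nat.cast_zero]
    exact sum_eq_zero fun j _ ↦ if_neg fun h : smallestPart p = _ ↦ he (h ▸ even_two_mul _)

end GeneratingFunction

section TernarySums

theorem sum_eq_zero_of_involution_neg {ι M : Type*} [AddCommGroup M]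
    (hM : ∀ z : M, z = -z → z = 0) {s : Finset ι} {f : ι → M} (σ : ι → ι)
    (hσ : ∀ i ∈ s, σ i ∈ s) (hσσ : ∀ i ∈ s, σ (σ i) = i) (hf : ∀ i ∈ s, f (σ i) = -f i) :
    ∑ i ∈ s, f i = 0 := by
  apply hM
  rw [← sum_neg_distrib]
  exact sum_nbij' σ σ hσ hσ hσσ hσσ fun i hi ↦ by rw [hf i hi, neg_neg]

/-- The triples `(x, u, v)` with `u, v > 0` and `x² + 2uv = N`. The box only makes the set
visibly finite. -/
noncomputable def hyperbolicTriples (N : ℤ) : Finset (ℤ × ℤ × ℤ) :=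
  {t ∈ Icc (-N) N ×ˢ Icc (-N) N ×ˢ Icc (-N) N |
    0 < t.2.1 ∧ 0 < t.2.2 ∧ t.1 ^ 2 + 2 * t.2.1 * t.2.2 = N}

/-- The triples `(x, a, m)` with `|m| < a` and `x² + a² - m² = N`. The box only makes the set
visibly finite. -/
noncomputable def conicTriples (N : ℤ) : Finset (ℤ × ℤ × ℤ) :=
  {t ∈ Icc (-N) N ×ˢ Icc (-N) N ×ˢ Icc (-N) N |
    -t.2.1 < t.2.2 ∧ t.2.2 < t.2.1 ∧ t.1 ^ 2 + t.2.1 ^ 2 - t.2.2 ^ 2 = N}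

variable {N : ℤ}

theorem mem_hyperbolicTriples {x u v : ℤ} :
    (x, u, v) ∈ hyperbolicTriples N ↔ 0 < u ∧ 0 < v ∧ x ^ 2 + 2 * u * v = N := by
  simp only [hyperbolicTriples, mem_filter, mem_product, mem_Icc, and_iff_right_iff_imp]
  rintro ⟨hu, hv, h⟩
  have hx := Int.le_self_sq x
  have hx' := Int.le_self_sq (-x)
  have huv : 0 < u * v := mul_pos hu hv
  exact ⟨⟨by nlinarith, by nlinarith⟩, ⟨by nlinarith, by nlinarith⟩, by nlinarith, by nlinarith⟩

theorem mem_conicTriples {x a m : ℤ} :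
    (x, a, m) ∈ conicTriples N ↔ -a < m ∧ m < a ∧ x ^ 2 + a ^ 2 - m ^ 2 = N := by
  simp only [conicTriples, mem_filter, mem_product, mem_Icc, and_iff_right_iff_imp]
  rintro ⟨h₁, h₂, h⟩
  have hx := Int.le_self_sq x
  have hx' := Int.le_self_sq (-x)
  have h₃ : a + m ≤ (a - m) * (a + m) := by nlinarith
  have h₄ : a - m ≤ (a - m) * (a + m) := by nlinarith
  exact ⟨⟨by nlinarith, by nlinarith⟩, ⟨by nlinarith, by nlinarith⟩, by nlinarith, by nlinarith⟩

theorem zmod_hyperbolic_eq_zero (hN : 3 ∣ N) {x u v : ℤ} (h : (x, u, v) ∈ hyperbolicTriples N) :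
    (x : ZMod 3) ^ 2 + 2 * u * v = 0 := by
  have hc := (ZMod.intCast_zmod_eq_zero_iff_dvd N 3).2 hN
  rw [← (mem_hyperbolicTriples.1 h).2.2] at hc
  exact_mod_cast hc

theorem zmod_conic_eq_zero (hN : 3 ∣ N) {x a m : ℤ} (h : (x, a, m) ∈ conicTriples N) :
    (x : ZMod 3) ^ 2 + a ^ 2 - m ^ 2 = 0 := by
  have hc := (ZMod.intCast_zmod_eq_zero_iff_dvd N 3).2 hN
  rw [← (mem_conicTriples.1 h).2.2] at hc
  exact_mod_cast hc

theorem sum_conic_of_lt_abs_eq_zero :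
    ∑ t ∈ conicTriples N with 0 < t.2.2 ∧ t.2.2 < |t.1|,
      (t.2.2 * (t.2.1 ^ 2 - t.1 ^ 2) : ZMod 3) = 0 := by
  refine sum_eq_zero_of_involution_neg (by decide)
    (fun t ↦ (t.1.sign * t.2.1, |t.1|, t.2.2)) ?_ ?_ ?_
  all_goals
    rintro ⟨x, a, m⟩ h
    simp only [mem_filter, mem_conicTriples] at h
    obtain ⟨⟨-, ha, hN⟩, hm, hx⟩ := h
    have ha' : 0 < a := hm.trans ha
    have hx' : x ≠ 0 := abs_pos.1 (hm.trans hx)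
    have hs : |x.sign * a| = a := by
      rw [abs_mul, abs_of_pos ha', Int.abs_sign_of_ne_zero hx', one_mul]
  · simp only [mem_filter, mem_conicTriples, hs, sq_abs]
    refine ⟨⟨by linarith, hx, ?_⟩, hm, ha⟩
    rw [← sq_abs (x.sign * a), hs, ← hN]
    ring
  · simp [hs, Int.sign_mul, Int.sign_eq_one_of_pos ha', Int.sign_mul_abs]
  · have h₁ : (x.sign * a) ^ 2 = a ^ 2 := by rw [← sq_abs, hs]
    have h₂ : m * (|x| ^ 2 - (x.sign * a) ^ 2) = -(m * (a ^ 2 - x ^ 2)) := by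
      rw [h₁, sq_abs]
      ring
    exact_mod_cast congrArg (Int.cast : ℤ → ZMod 3) h₂

theorem sum_conic_of_abs_le_eq_sum_hyperbolic (hN : 3 ∣ N) :
    ∑ t ∈ conicTriples N with |t.1| ≤ t.2.2, (t.2.2 * (t.2.1 ^ 2 - t.1 ^ 2) : ZMod 3) =
      ∑ t ∈ hyperbolicTriples N with 2 * t.2.2 ≤ t.2.1 + 2 * t.1,
        (t.2.1 - t.2.1 * t.1 ^ 2 + t.2.1 ^ 2 * t.1 : ZMod 3) := by
  have hodd : ∑ t ∈ conicTriples N with |t.1| ≤ t.2.2,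
      (t.1 * (t.2.1 ^ 2 - t.1 ^ 2) : ZMod 3) = 0 := by
    refine sum_eq_zero_of_involution_neg (by decide) (fun t ↦ (-t.1, t.2)) ?_ ?_ ?_
    all_goals rintro ⟨x, a, m⟩ h
    · simpa [mem_conicTriples] using h
    · simp
    · push_cast
      ring
  rw [← sub_zero (∑ t ∈ conicTriples N with _, _), ← hodd, ← sum_sub_distrib,
    ← sum_filter_of_ne (p := fun t : ℤ × ℤ × ℤ ↦ t.1 ≠ t.2.2)
      fun t _ ht hxm ↦ ht (by rw [hxm, sub_self]), filter_filter]
  refine sum_nbij' (fun t ↦ (t.2.1 - t.2.2 + t.1, t.2.2 - t.1, t.2.1 - t.2.2))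
    (fun t ↦ (t.1 - t.2.2, t.2.1 + t.1, t.2.1 + t.1 - t.2.2)) ?_ ?_ ?_ ?_ ?_
  all_goals
    rintro ⟨x, y, z⟩ h
    have h' := h
    simp only [mem_filter, mem_conicTriples, mem_hyperbolicTriples, abs_le] at h
    obtain ⟨⟨h₁, h₂, h₃⟩, h₄⟩ := h
  · simp only [mem_filter, mem_hyperbolicTriples]
    exact ⟨⟨by omega, by omega, by linear_combination h₃⟩, by omega⟩
  · simp only [mem_filter, mem_conicTriples, abs_le]
    exact ⟨⟨by omega, by omega, by linear_combination h₃⟩, ⟨by omega, by omega⟩, by omega⟩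
  · ext <;> simp
  · ext <;> simp
  · have key : ∀ x a m : ZMod 3, x ^ 2 + a ^ 2 - m ^ 2 = 0 →
        m * (a ^ 2 - x ^ 2) - x * (a ^ 2 - x ^ 2) =
          (m - x) - (m - x) * (a - m + x) ^ 2 + (m - x) ^ 2 * (a - m + x) := by decide
    push_cast
    exact key _ _ _ (zmod_conic_eq_zero hN (mem_of_mem_filter _ h'))

theorem sum_conic_pos_eq_sum_hyperbolic (hN : 3 ∣ N) :
    ∑ t ∈ conicTriples N with 0 < t.2.2, ((1 + t.1 ^ 2) * t.2.2 : ZMod 3) =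
      ∑ t ∈ hyperbolicTriples N with 2 * t.2.2 ≤ t.2.1 + 2 * t.1,
        (t.2.1 - t.2.1 * t.1 ^ 2 + t.2.1 ^ 2 * t.1 : ZMod 3) := by
  have key : ∀ x a m : ZMod 3, x ^ 2 + a ^ 2 - m ^ 2 = 0 →
    (1 + x ^ 2) * m = m * (a ^ 2 - x ^ 2) := by decide
  rw [sum_congr rfl fun t ht ↦ key _ _ _ (zmod_conic_eq_zero hN (mem_of_mem_filter t ht)),
    ← sum_filter_add_sum_filter_not _ fun t ↦ t.2.2 < |t.1|, filter_filter, filter_filter,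
    sum_conic_of_lt_abs_eq_zero, zero_add, ← sum_conic_of_abs_le_eq_sum_hyperbolic hN]
  refine sum_subset (fun t ht ↦ ?_) fun t ht ht' ↦ ?_ <;>
    simp only [mem_filter, not_lt, not_and] at *
  · exact ⟨ht.1, ht.2.2⟩
  · have h₀ : t.2.2 = 0 :=
      le_antisymm (not_lt.1 fun h ↦ ht' ht.1 h ht.2) ((abs_nonneg _).trans ht.2)
    rw [h₀, Int.cast_zero, zero_mul]

theorem sum_hyperbolic_of_two_mul_lt_eq_zero :
    ∑ t ∈ hyperbolicTriples N with 2 * t.1 + 2 * t.2.1 < t.2.2,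
      (t.2.1 + t.2.1 ^ 2 * t.1 : ZMod 3) = 0 := by
  refine sum_eq_zero_of_involution_neg (by decide)
    (fun t ↦ (-2 * t.2.1 - t.1, t.2.1, t.2.2 - 2 * t.1 - 2 * t.2.1)) ?_ ?_ ?_
  all_goals
    rintro ⟨x, u, v⟩ h
    simp only [mem_filter, mem_hyperbolicTriples] at h
    obtain ⟨⟨h₁, h₂, h₃⟩, h₄⟩ := h
  · simp only [mem_filter, mem_hyperbolicTriples]
    exact ⟨⟨h₁, by omega, by linear_combination h₃⟩, by omega⟩
  · ext <;> simp only <;> ring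
  · have key : ∀ x u : ZMod 3, u + u ^ 2 * (-2 * u - x) = -(u + u ^ 2 * x) := by decide
    push_cast
    exact key _ _

theorem sum_hyperbolic_swap (hN : 3 ∣ N) :
    ∑ t ∈ hyperbolicTriples N with 2 * t.2.2 ≤ t.2.1 + 2 * t.1,
        (t.2.1 * t.1 ^ 2 + t.2.1 ^ 2 * t.1 : ZMod 3) =
      ∑ t ∈ hyperbolicTriples N with 2 * t.1 + 2 * t.2.1 < t.2.2,
        (t.2.1 * t.1 ^ 2 - t.2.1 ^ 2 * t.1 : ZMod 3) := by
  have hboundary : ∀ t ∈ hyperbolicTriples N,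
      (t.2.1 * t.1 ^ 2 + t.2.1 ^ 2 * t.1 : ZMod 3) ≠ 0 → 2 * t.2.2 ≠ t.2.1 + 2 * t.1 := by
    rintro ⟨x, u, v⟩ ht hne heq
    have key : ∀ x u v : ZMod 3, x ^ 2 + 2 * u * v = 0 → 2 * v = u + 2 * x →
      u * x ^ 2 + u ^ 2 * x = 0 := by decide
    exact hne (key _ _ _ (zmod_hyperbolic_eq_zero hN ht) (by exact_mod_cast congrArg Int.cast heq))
  rw [← sum_filter_of_ne fun t ht ↦ hboundary t (mem_of_mem_filter t ht), filter_filter]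
  refine sum_nbij' (fun t ↦ (-t.1, t.2.2, t.2.1)) (fun t ↦ (-t.1, t.2.2, t.2.1)) ?_ ?_ ?_ ?_ ?_
  all_goals
    rintro ⟨x, u, v⟩ h
    have h' := h
    simp only [mem_filter, mem_hyperbolicTriples] at h
    obtain ⟨⟨h₁, h₂, h₃⟩, h₄⟩ := h
  · simp only [mem_filter, mem_hyperbolicTriples]
    exact ⟨⟨h₂, h₁, by linear_combination h₃⟩, by omega⟩
  · simp only [mem_filter, mem_hyperbolicTriples]
    exact ⟨⟨h₂, h₁, by linear_combination h₃⟩, by omega, by omega⟩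
  · simp
  · simp
  · have key : ∀ x u v : ZMod 3, x ^ 2 + 2 * u * v = 0 →
        u * x ^ 2 + u ^ 2 * x = v * (-x) ^ 2 - v ^ 2 * -x := by decide
    push_cast
    exact key _ _ _ (zmod_hyperbolic_eq_zero hN (mem_of_mem_filter _ h'))

theorem sum_conic_boundary_eq_zero (hN : 3 ∣ N) :
    ∑ t ∈ conicTriples N with -t.1 < t.2.2 ∧ t.2.2 = t.1,
      ((1 + (t.1 - t.2.1 + t.2.2) ^ 2) * (t.2.1 - t.2.2) : ZMod 3) = 0 := by
  refine sum_eq_zero_of_involution_neg (by decide)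
    (fun t ↦ (t.2.1 - t.1, t.2.1, t.2.1 - t.1)) ?_ ?_ ?_
  all_goals
    rintro ⟨y, a, m⟩ h
    have h' := zmod_conic_eq_zero hN (mem_of_mem_filter _ h)
    simp only [mem_filter, mem_conicTriples] at h
    obtain ⟨⟨h₁, h₂, h₃⟩, h₄, rfl⟩ := h
  · simp only [mem_filter, mem_conicTriples]
    exact ⟨⟨by omega, by omega, by linear_combination h₃⟩, by omega, trivial⟩
  · simp
  · have key : ∀ m a : ZMod 3, m ^ 2 + a ^ 2 - m ^ 2 = 0 →
        (1 + (a - m - a + (a - m)) ^ 2) * (a - (a - m)) =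
          -((1 + (m - a + m) ^ 2) * (a - m)) := by decide
    push_cast
    exact key _ _ h'

theorem sum_conic_interior_eq_zero (hN : 3 ∣ N) :
    ∑ t ∈ conicTriples N with -t.1 < t.2.2 ∧ t.2.2 < t.1,
      ((1 + (t.1 - t.2.1 + t.2.2) ^ 2) * (t.2.1 - t.2.2) : ZMod 3) = 0 := by
  have hneg : ∑ t ∈ conicTriples N with -t.1 < t.2.2 ∧ t.2.2 < t.1,
      ((1 + (t.1 - t.2.1 + t.2.2) ^ 2) * (t.2.1 - t.2.2) : ZMod 3) =
      ∑ t ∈ conicTriples N with -t.1 < t.2.2 ∧ t.2.2 < t.1,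
        ((1 + (t.1 - t.2.1 - t.2.2) ^ 2) * (t.2.1 + t.2.2) : ZMod 3) := by
    refine sum_nbij' (fun t ↦ (t.1, t.2.1, -t.2.2)) (fun t ↦ (t.1, t.2.1, -t.2.2)) ?_ ?_ ?_ ?_ ?_
    all_goals
      rintro ⟨y, a, m⟩ h
      simp only [mem_filter, mem_conicTriples] at h ⊢
    · exact ⟨⟨by omega, by omega, by linear_combination h.1.2.2⟩, by omega, by omega⟩
    · exact ⟨⟨by omega, by omega, by linear_combination h.1.2.2⟩, by omega, by omega⟩
    · simp
    · simp
    · push_cast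
      ring
  have hswap : ∑ t ∈ conicTriples N with -t.1 < t.2.2 ∧ t.2.2 < t.1,
      (t.2.1 - t.1 : ZMod 3) = 0 := by
    refine sum_eq_zero_of_involution_neg (by decide) (fun t ↦ (t.2.1, t.1, t.2.2)) ?_ ?_ ?_
    all_goals rintro ⟨y, a, m⟩ h
    · simp only [mem_filter, mem_conicTriples] at h ⊢
      exact ⟨⟨h.2.1, h.2.2, by linear_combination h.1.2.2⟩, h.1.1, h.1.2.1⟩
    · rfl
    · ring
  have key : ∀ y a m : ZMod 3, y ^ 2 + a ^ 2 - m ^ 2 = 0 →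
      (1 + (y - a + m) ^ 2) * (a - m) + (1 + (y - a - m) ^ 2) * (a + m) = a - y := by decide
  have htwo : ∀ z : ZMod 3, z + z = 0 → z = 0 := by decide
  apply htwo
  nth_rw 2 [hneg]
  rw [← sum_add_distrib, sum_congr rfl fun t ht ↦
    key _ _ _ (zmod_conic_eq_zero hN (mem_of_mem_filter t ht)), hswap]

theorem sum_hyperbolic_middle_eq_zero (hN : 3 ∣ N) :
    ∑ t ∈ hyperbolicTriples N with t.2.1 + 2 * t.1 < 2 * t.2.2 ∧ t.2.2 ≤ 2 * t.1 + 2 * t.2.1,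
      ((1 + t.1 ^ 2) * t.2.1 : ZMod 3) = 0 := by
  trans ∑ t ∈ conicTriples N with -t.1 < t.2.2 ∧ t.2.2 ≤ t.1,
      ((1 + (t.1 - t.2.1 + t.2.2) ^ 2) * (t.2.1 - t.2.2) : ZMod 3)
  · refine sum_nbij' (fun t ↦ (t.1 + t.2.1, t.2.2 - t.1, t.2.2 - t.2.1 - t.1))
      (fun t ↦ (t.1 - t.2.1 + t.2.2, t.2.1 - t.2.2, t.1 + t.2.2)) ?_ ?_ ?_ ?_ ?_
    all_goals
      rintro ⟨x, y, z⟩ h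
      simp only [mem_filter, mem_conicTriples, mem_hyperbolicTriples] at h ⊢
    · exact ⟨⟨by omega, by omega, by linear_combination h.1.2.2⟩, by omega, by omega⟩
    · exact ⟨⟨by omega, by omega, by linear_combination h.1.2.2⟩, by omega, by omega⟩
    · ext <;> simp only <;> ring
    · ext <;> simp only <;> ring
    · push_cast
      ring
  · rw [← sum_filter_add_sum_filter_not _ fun t ↦ t.2.2 = t.1, filter_filter, filter_filter]
    simp only [and_assoc, ← lt_iff_le_and_ne, ← ne_eq]
    rw [sum_conic_interior_eq_zero hN, add_zero, ← sum_conic_boundary_eq_zero hN]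
    refine sum_congr (filter_congr fun t _ ↦ ?_) fun _ _ ↦ rfl
    omega

theorem sum_hyperbolic_add_two_mul_sum_conic_eq_zero (hN : 3 ∣ N) :
    ∑ t ∈ hyperbolicTriples N, ((1 + t.1 ^ 2) * t.2.1 : ZMod 3) +
      2 * ∑ t ∈ conicTriples N with 0 < t.2.2, ((1 + t.1 ^ 2) * t.2.2 : ZMod 3) = 0 := by
  have hreflect := sum_hyperbolic_of_two_mul_lt_eq_zero (N := N)
  have hswap := sum_hyperbolic_swap hN
  have hleft : ∑ t ∈ hyperbolicTriples N with ¬2 * t.2.2 ≤ t.2.1 + 2 * t.1,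
      ((1 + t.1 ^ 2) * t.2.1 : ZMod 3) =
      ∑ t ∈ hyperbolicTriples N with 2 * t.1 + 2 * t.2.1 < t.2.2,
        ((1 + t.1 ^ 2) * t.2.1 : ZMod 3) := by
    rw [← sum_filter_add_sum_filter_not _ fun t ↦ 2 * t.1 + 2 * t.2.1 < t.2.2, filter_filter,
      filter_filter]
    simp only [not_le, not_lt]
    rw [sum_hyperbolic_middle_eq_zero hN, add_zero]
    refine sum_congr (filter_congr ?_) fun _ _ ↦ rfl
    rintro ⟨x, u, v⟩ h
    simp only [mem_hyperbolicTriples] at h ⊢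
    omega
  rw [sum_conic_pos_eq_sum_hyperbolic hN,
    ← sum_filter_add_sum_filter_not _ fun t ↦ 2 * t.2.2 ≤ t.2.1 + 2 * t.1, hleft]
  simp only [add_mul, one_mul, mul_comm (_ ^ 2 : ZMod 3), sum_add_distrib, sum_sub_distrib] at *
  linear_combination (norm := (ring_nf; reduce_mod_char)) hreflect - hswap

end TernarySums

section EulerDerivation

variable {k : Type*} [CommRing k]

variable (k) in
/-- The derivation `q d/dq` of power series, which multiplies the coefficient of `q^N` by `N`. -/
noncomputable def eulerDerivation : Derivation k k⟦X⟧ k⟦X⟧ :=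
  (X : k⟦X⟧) • d⁄dX k

theorem coeff_eulerDerivation (N : ℕ) (f : k⟦X⟧) :
    coeff N (eulerDerivation k f) = N * coeff N f := by
  rw [eulerDerivation, Derivation.smul_apply, smul_eq_mul]
  cases N with
  | zero => rw [coeff_zero_X_mul, Nat.cast_zero, zero_mul]
  | succ N => rw [coeff_succ_X_mul, coeff_derivative, mul_comm, Nat.cast_succ]

/-- With `C = S φ` and `ψ = φ + φ'`, this recovers `S' + S''` from `C' + C''` and `ψ C - (ψ C)''`,
both of which have many vanishing coefficients when `φ` is the theta function. -/
theorem pow_three_mul_derivation_add {R A : Type*} [CommRing R] [CommRing A] [Algebra R A]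
    [CharP A 3] (D : Derivation R A A) {φ : A} (hφ : D (D φ) = D φ) (S : A) :
    φ ^ 3 * (D S + D (D S)) =
      (φ ^ 2 + φ * D φ + D φ ^ 2) * (D (S * φ) + D (D (S * φ))) +
        D φ * ((φ + D φ) * (S * φ) - D (D ((φ + D φ) * (S * φ)))) := by
  have h3 : (3 : A) = 0 := CharP.ofNat_eq_zero A 3
  simp only [map_add, Derivation.leibniz, smul_eq_mul, hφ]
  linear_combination
    (-(D S * φ ^ 2 * D φ - D S * φ * D φ ^ 2 + S * φ ^ 2 * D φ - S * D φ ^ 3)) * h3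

end EulerDerivation

section SignedSeries

variable {k ι κ : Type*} [CommRing k]

/-- The finite sum `∑_{t ∈ s} c_t (-q)^{e_t}`. -/
noncomputable def signedSeries (s : Finset ι) (c : ι → k) (e : ι → ℕ) : k⟦X⟧ :=
  ∑ t ∈ s, C (c t) * (-X) ^ e t

theorem coeff_signedSeries (s : Finset ι) (c : ι → k) (e : ι → ℕ) (N : ℕ) :
    coeff N (signedSeries s c e) = (-1) ^ N * ∑ t ∈ s with e t = N, c t := by
  rw [signedSeries, map_sum, mul_sum, sum_filter]
  refine sum_congr rfl fun t _ ↦ ?_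
  rw [← neg_one_mul, mul_pow, ← map_one C, ← map_neg, ← map_pow, ← mul_assoc, ← map_mul,
    coeff_C_mul_X_pow]
  split_ifs with h₁ h₂ h₂
  · rw [h₂, mul_comm]
  · exact absurd h₁.symm h₂
  · exact absurd h₂.symm h₁
  · rfl

theorem eulerDerivation_signedSeries (s : Finset ι) (c : ι → k) (e : ι → ℕ) :
    eulerDerivation k (signedSeries s c e) = signedSeries s (fun t ↦ e t * c t) e := by
  ext N
  rw [coeff_eulerDerivation, coeff_signedSeries, coeff_signedSeries, mul_left_comm, mul_sum]
  refine congrArg _ (sum_congr rfl fun t ht ↦ ?_)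
  rw [(mem_filter.1 ht).2]

theorem signedSeries_add (s : Finset ι) (c d : ι → k) (e : ι → ℕ) :
    signedSeries s c e + signedSeries s d e = signedSeries s (fun t ↦ c t + d t) e := by
  simp only [signedSeries, ← sum_add_distrib, ← add_mul, ← map_add]

theorem signedSeries_mul (s : Finset ι) (c : ι → k) (e : ι → ℕ) (t : Finset κ) (d : κ → k)
    (f : κ → ℕ) :
    signedSeries s c e * signedSeries t d f =
      signedSeries (s ×ˢ t) (fun p ↦ c p.1 * d p.2) (fun p ↦ e p.1 + f p.2) := by
  simp only [signedSeries, sum_mul_sum, sum_product, map_mul, pow_add]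
  exact sum_congr rfl fun _ _ ↦ sum_congr rfl fun _ _ ↦ by ring

end SignedSeries

section ThetaLambert

variable {k : Type*} [Field k]

theorem partialTheta_eq_signedSeries (M : ℕ) :
    partialTheta k M = signedSeries (Icc (-M : ℤ) M) (fun _ ↦ 1) (fun x ↦ x.natAbs ^ 2) := by
  simp only [partialTheta, signedSeries, map_one, one_mul]

theorem partialLambert_eq_signedSeries (M : ℕ) :
    partialLambert k M =
      signedSeries (Icc 1 M ×ˢ Icc 1 M) (fun p ↦ (p.2 : k)) (fun p ↦ 2 * p.1 * p.2) +
      2 * signedSeries (Icc 1 M ×ˢ Icc 1 M) (fun p ↦ (p.2 : k))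
        (fun p ↦ p.1 ^ 2 + 2 * p.1 * p.2) := by
  simp only [partialLambert, signedSeries, sum_product, map_natCast, mul_sum, ← sum_add_distrib]
  exact sum_congr rfl fun _ _ ↦ sum_congr rfl fun _ _ ↦ by ring

theorem constantCoeff_partialTheta (M : ℕ) : constantCoeff (partialTheta k M) = 1 := by
  rw [← coeff_zero_eq_constantCoeff_apply, partialTheta_eq_signedSeries, coeff_signedSeries,
    pow_zero, one_mul]
  have hzero : ({x ∈ Icc (-M : ℤ) M | x.natAbs ^ 2 = 0} : Finset ℤ) = {0} := by
    ext x
    simp only [mem_filter, mem_Icc, mem_singleton, pow_eq_zero_iff two_ne_zero, Int.natAbs_eq_zero]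
    omega
  rw [hzero, sum_singleton]

theorem coeff_mul_sptSeries_mul_partialTheta {N M : ℕ} (hM : N ≤ 2 * M) (ψ : k⟦X⟧) :
    coeff N (ψ * (sptSeries k M * partialTheta k M)) =
      coeff N (ψ * partialLambert k M) := by
  have hdvd := (X_pow_dvd_sptSeries_mul_partialTheta_sub (k := k) M).mul_left ψ
  rw [mul_sub] at hdvd
  exact sub_eq_zero.1 (by rw [← map_sub, X_pow_dvd_iff.1 hdvd N (by omega)])

theorem partialTheta_add_eulerDerivation (M : ℕ) :
    partialTheta k M + eulerDerivation k (partialTheta k M) =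
      signedSeries (Icc (-M : ℤ) M) (fun x ↦ 1 + (x : k) ^ 2) (fun x ↦ x.natAbs ^ 2) := by
  rw [partialTheta_eq_signedSeries, eulerDerivation_signedSeries, signedSeries_add]
  congr 1
  ext x
  rw [mul_one, ← Int.cast_natCast, Nat.cast_pow, Int.natCast_natAbs, sq_abs, Int.cast_pow]

end ThetaLambert

section TripleSums

variable {k : Type*} [CommRing k]

theorem sum_theta_lambert_eq_sum_hyperbolicTriples {N M : ℕ} (hM : N ≤ 2 * M) :
    ∑ p ∈ Icc (-M : ℤ) M ×ˢ Icc 1 M ×ˢ Icc 1 M with p.1.natAbs ^ 2 + 2 * p.2.1 * p.2.2 = N,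
        ((1 + p.1 ^ 2) * p.2.2 : k) =
      ∑ t ∈ hyperbolicTriples N, ((1 + t.1 ^ 2) * t.2.1 : k) := by
  refine sum_nbij' (fun p ↦ (p.1, p.2.2, p.2.1)) (fun t ↦ (t.1, t.2.2.toNat, t.2.1.toNat))
    ?_ ?_ ?_ ?_ ?_
  · rintro ⟨x, r, u⟩ h
    simp only [mem_filter, mem_product, mem_Icc, mem_hyperbolicTriples] at h ⊢
    zify at h
    rw [sq_abs] at h
    exact ⟨by omega, by omega, by linarith⟩
  · rintro ⟨x, u, v⟩ h
    obtain ⟨hu, hv, h⟩ := mem_hyperbolicTriples.1 h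
    lift u to ℕ using hu.le
    lift v to ℕ using hv.le
    simp only [mem_filter, mem_product, mem_Icc, Int.toNat_natCast]
    zify at hM ⊢
    rw [sq_abs]
    exact ⟨⟨⟨by nlinarith, by nlinarith⟩, ⟨by omega, by nlinarith⟩, by omega, by nlinarith⟩,
      by linarith⟩
  · simp
  · rintro ⟨x, u, v⟩ h
    obtain ⟨hu, hv, -⟩ := mem_hyperbolicTriples.1 h
    simp [hu.le, hv.le]
  · simp

theorem sum_theta_lambert_eq_sum_conicTriples {N M : ℕ} (hM : N ≤ 2 * M) :
    ∑ p ∈ Icc (-M : ℤ) M ×ˢ Icc 1 M ×ˢ Icc 1 M with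
        p.1.natAbs ^ 2 + (p.2.1 ^ 2 + 2 * p.2.1 * p.2.2) = N, ((1 + p.1 ^ 2) * p.2.2 : k) =
      ∑ t ∈ conicTriples N with 0 < t.2.2, ((1 + t.1 ^ 2) * t.2.2 : k) := by
  refine sum_nbij' (fun p ↦ (p.1, p.2.1 + p.2.2, p.2.2))
    (fun t ↦ (t.1, (t.2.1 - t.2.2).toNat, t.2.2.toNat)) ?_ ?_ ?_ ?_ ?_
  · rintro ⟨x, r, u⟩ h
    simp only [mem_filter, mem_product, mem_Icc, mem_conicTriples] at h ⊢
    zify at h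
    rw [sq_abs] at h
    exact ⟨⟨by omega, by omega, by linarith⟩, by omega⟩
  · rintro ⟨x, a, m⟩ h
    simp only [mem_filter, mem_conicTriples] at h
    obtain ⟨⟨-, ha, h⟩, hm⟩ := h
    obtain ⟨r, rfl⟩ : ∃ r, a = r + m := ⟨a - m, by ring⟩
    have hr : 0 < r := by linarith
    lift r to ℕ using hr.le
    lift m to ℕ using hm.le
    simp only [mem_filter, mem_product, mem_Icc, Int.toNat_natCast, add_sub_cancel_right]
    zify at hM ⊢
    rw [sq_abs]
    exact ⟨⟨⟨by nlinarith, by nlinarith⟩, ⟨by omega, by nlinarith⟩, by omega, by nlinarith⟩,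
      by linarith⟩
  · simp
  · rintro ⟨x, a, m⟩ h
    simp only [mem_filter, mem_conicTriples] at h
    simp [h.2.le, h.1.2.1.le]
  · simp

end TripleSums

section ModThree

theorem coeff_partialLambert_eq_zero {N : ℕ} (hN : (N : ZMod 3) = 1) (M : ℕ) :
    coeff N (partialLambert (ZMod 3) M) = 0 := by
  have hproduct : ∑ p ∈ Icc 1 M ×ˢ Icc 1 M with 2 * p.1 * p.2 = N, (p.2 : ZMod 3) = 0 := by
    refine sum_eq_zero_of_involution_neg (by decide) Prod.swap ?_
      (fun _ _ ↦ Prod.swap_swap _) ?_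
    all_goals
      rintro ⟨r, u⟩ h
      simp only [Prod.swap_prod_mk, mem_filter, mem_product] at h ⊢
    · exact ⟨h.1.symm, by linarith [h.2]⟩
    · have key : ∀ r u : ZMod 3, 2 * r * u = 1 → r = -u := by decide
      exact key r u (by exact_mod_cast hN ▸ congrArg (Nat.cast : ℕ → ZMod 3) h.2)
  have hsquare :
      ∑ p ∈ Icc 1 M ×ˢ Icc 1 M with p.1 ^ 2 + 2 * p.1 * p.2 = N, (p.2 : ZMod 3) = 0 := by
    refine sum_eq_zero fun p hp ↦ ?_
    have key : ∀ r u : ZMod 3, r ^ 2 + 2 * r * u = 1 → u = 0 := by decide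
    exact key p.1 p.2
      (by exact_mod_cast hN ▸ congrArg (Nat.cast : ℕ → ZMod 3) (mem_filter.1 hp).2)
  rw [partialLambert_eq_signedSeries, map_add, ← map_ofNat C 2, coeff_C_mul, coeff_signedSeries,
    coeff_signedSeries, hproduct, hsquare, mul_zero, mul_zero, add_zero]

theorem eulerDerivation_eulerDerivation_partialTheta (M : ℕ) :
    eulerDerivation (ZMod 3) (eulerDerivation (ZMod 3) (partialTheta (ZMod 3) M)) =
      eulerDerivation (ZMod 3) (partialTheta (ZMod 3) M) := by
  have key : ∀ x : ZMod 3, x ^ 2 * (x ^ 2 * 1) = x ^ 2 * 1 := by decide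
  simp only [partialTheta_eq_signedSeries, eulerDerivation_signedSeries, Nat.cast_pow, key]

theorem coeff_theta_mul_partialLambert_eq_zero {N M : ℕ} (hN : 3 ∣ N) (hM : N ≤ 2 * M) :
    coeff N ((partialTheta (ZMod 3) M + eulerDerivation (ZMod 3) (partialTheta (ZMod 3) M)) *
      partialLambert (ZMod 3) M) = 0 := by
  have h := sum_hyperbolic_add_two_mul_sum_conic_eq_zero (Int.natCast_dvd_natCast.2 hN)
  rw [partialTheta_add_eulerDerivation, partialLambert_eq_signedSeries, mul_add, mul_left_comm,
    signedSeries_mul, signedSeries_mul, map_add, ← map_ofNat C 2, coeff_C_mul, coeff_signedSeries,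
    coeff_signedSeries, sum_theta_lambert_eq_sum_hyperbolicTriples hM,
    sum_theta_lambert_eq_sum_conicTriples hM, mul_left_comm, ← mul_add, h, mul_zero]

theorem X_pow_dvd_eulerDerivation_sptSeries_add (M : ℕ) :
    (X : (ZMod 3)⟦X⟧) ^ (2 * M + 1) ∣ eulerDerivation (ZMod 3) (sptSeries (ZMod 3) M) +
      eulerDerivation (ZMod 3) (eulerDerivation (ZMod 3) (sptSeries (ZMod 3) M)) := by
  set D := eulerDerivation (ZMod 3)
  set θ := partialTheta (ZMod 3) M
  set S := sptSeries (ZMod 3) M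
  have hlambert : (X : (ZMod 3)⟦X⟧) ^ (2 * M + 1) ∣ D (S * θ) + D (D (S * θ)) := by
    refine X_pow_dvd_iff.2 fun N hN ↦ ?_
    have hcoeff := coeff_mul_sptSeries_mul_partialTheta (k := ZMod 3)
      (Nat.le_of_lt_succ hN) 1
    rw [one_mul, one_mul] at hcoeff
    rw [map_add, coeff_eulerDerivation, coeff_eulerDerivation, coeff_eulerDerivation, hcoeff]
    have key : ∀ x : ZMod 3, x = 1 ∨ x + x * x = 0 := by decide
    obtain h | h := key N
    · rw [coeff_partialLambert_eq_zero h, mul_zero, mul_zero, add_zero]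
    · rw [← mul_assoc, ← add_mul, h, zero_mul]
  have hproduct : (X : (ZMod 3)⟦X⟧) ^ (2 * M + 1) ∣
      (θ + D θ) * (S * θ) - D (D ((θ + D θ) * (S * θ))) := by
    refine X_pow_dvd_iff.2 fun N hN ↦ ?_
    rw [map_sub, coeff_eulerDerivation, coeff_eulerDerivation,
      coeff_mul_sptSeries_mul_partialTheta (Nat.le_of_lt_succ hN)]
    have key : ∀ x : ZMod 3, x = 0 ∨ x * x = 1 := by decide
    obtain h | h := key N
    · rw [coeff_theta_mul_partialLambert_eq_zero ((ZMod.natCast_eq_zero_iff N 3).1 h)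
        (Nat.le_of_lt_succ hN), mul_zero, mul_zero, sub_zero]
    · rw [← mul_assoc, h, one_mul, sub_self]
  have hunit : IsUnit (θ ^ 3) := by
    refine IsUnit.pow 3 (isUnit_iff_constantCoeff.2 ?_)
    exact (constantCoeff_partialTheta (k := ZMod 3) M).symm ▸ isUnit_one
  have : CharP (ZMod 3)⟦X⟧ 3 := charP_of_injective_algebraMap C_injective 3
  rw [← hunit.dvd_mul_left,
    pow_three_mul_derivation_add D (eulerDerivation_eulerDerivation_partialTheta M) S]
  exact dvd_add (hlambert.mul_left _) (hproduct.mul_left _)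

theorem coeff_sptSeries_eq_zero {N M : ℕ} (hN : (N : ZMod 3) = 1) (hM : N ≤ 2 * M) :
    coeff N (sptSeries (ZMod 3) M) = 0 := by
  have h := X_pow_dvd_iff.1 (X_pow_dvd_eulerDerivation_sptSeries_add M) N (by omega)
  rw [map_add, coeff_eulerDerivation, coeff_eulerDerivation, coeff_eulerDerivation, hN, one_mul,
    one_mul, ← two_mul] at h
  exact (mul_eq_zero.1 h).resolve_left (by decide)

end ModThree

theorem spt2bar_three_mul_add_one_div_three (n : ℕ) : 3 ∣ spt2bar (3 * n + 1) := by
  have hone : ((3 * n + 1 : ℕ) : ZMod 3) = 1 := by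
    rw [Nat.cast_add, Nat.cast_mul, CharP.cast_eq_zero, zero_mul, zero_add, Nat.cast_one]
  rw [← ZMod.natCast_eq_zero_iff, ← coeff_sptSeries (M := 3 * n + 1) (by omega) (by omega)]
  exact coeff_sptSeries_eq_zero hone (by omega)
end
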